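/- arXiv:1006.2560 — 4 statements merged into one kernel-verified Lean document; each statement's English description precedes it below -/
import Mathlib

section
/- Let α ⪰ ω be lattice paths from (0,0) to (n,r) and let Γ(α,ω) be the associated lattice path polymatroid. Then the toric ideal of Γ(α,ω) (the kernel of the toric map φ) is generated by the symmetric exchange binomials of Γ(α,ω). -/
/-- A lattice path from `(0,0)` to `(n,r)`, encoded by the set of positions of
its north steps among its `n + r` steps. -/
def IsLatticePath (n r : ℕ) (σ : Finset ℕ) : Prop :=
  σ ⊆ Finset.Icc 1 (n + r) ∧ σ.card = r

/-- `σ ⪰ τ`: each element of `N(σ)`, in increasing order, is at most the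
corresponding element of `N(τ)`. -/
def PathAbove (σ τ : Finset ℕ) : Prop :=
  ∀ k (h1 : k < (σ.sort (· ≤ ·)).length) (h2 : k < (τ.sort (· ≤ ·)).length),
    (σ.sort (· ≤ ·)).get ⟨k, h1⟩ ≤ (τ.sort (· ≤ ·)).get ⟨k, h2⟩

/-- The number of east steps of `σ` before position `a`. -/
def eastBefore (σ : Finset ℕ) (a : ℕ) : ℕ :=
  ((Finset.Icc 1 (a - 1)).filter (fun b => b ∉ σ)).card

/-- The monomial `m(σ)` of a lattice path: the exponent of `x_i` is the number
of north steps of `σ` along the line `x = i`. -/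
noncomputable def pathMonomial (σ : Finset ℕ) : ℕ →₀ ℕ :=
  ∑ a ∈ σ, Finsupp.single (eastBefore σ a) 1

/-- The bases of the lattice path polymatroid `Γ(α, ω)`: the monomials `m(σ)`
for lattice paths `σ` with `α ⪰ σ ⪰ ω`. -/
def IsLPBasis (n r : ℕ) (α ω : Finset ℕ) (m : ℕ →₀ ℕ) : Prop :=
  ∃ σ : Finset ℕ, IsLatticePath n r σ ∧ PathAbove α σ ∧ PathAbove σ ω ∧ m = pathMonomial σ

/-- `nn, nn'` are obtained from `m, m'` by a symmetric exchange, relative to a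
basis predicate `P`. -/
def SymExchP (P : (ℕ →₀ ℕ) → Prop) (m m' nn nn' : ℕ →₀ ℕ) : Prop :=
  P m ∧ P m' ∧ ∃ i j,
    m' i < m i ∧ m j < m' j ∧
    nn = m - Finsupp.single i 1 + Finsupp.single j 1 ∧
    nn' = m' + Finsupp.single i 1 - Finsupp.single j 1 ∧
    P nn ∧ P nn'

/-- The toric map of the collection of bases `P`: sends `Y_m` to the monomial `m`. -/
noncomputable def toricMapP (P : (ℕ →₀ ℕ) → Prop) :
    MvPolynomial {m : ℕ →₀ ℕ // P m} ℂ →ₐ[ℂ] MvPolynomial ℕ ℂ :=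
  MvPolynomial.aeval fun m => MvPolynomial.monomial m.1 1

/-- The set of symmetric exchange binomials. -/
def SEBP (P : (ℕ →₀ ℕ) → Prop) : Set (MvPolynomial {m : ℕ →₀ ℕ // P m} ℂ) :=
  { p | ∃ m m' nn nn' : {m : ℕ →₀ ℕ // P m},
      SymExchP P m.1 m'.1 nn.1 nn'.1 ∧
      p = MvPolynomial.X m * MvPolynomial.X m' - MvPolynomial.X nn * MvPolynomial.X nn' }

/-!
A path is determined by the partial degrees of its monomial (the degree in `x_0, …, x_i`, for each
`i`), and `α ⪰ σ ⪰ ω` says exactly that the partial degrees of `m(σ)` lie between those of `m(ω)`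
and `m(α)`. If some partial degree of a basis `x` exceeds that of `y` by more than `s`, then along
a maximal run of such places one unit can be moved from `x` to `y`; this is a symmetric exchange,
and it stays between the bounds. With `s = 0` and `s = 1` such moves turn any product of variables
into one in which, in every partial degree, the factors decrease weakly and differ by at most `1`;
a strictly convex weight guarantees termination. A sorted product is determined by its image under
the toric map, so two products with the same image are congruent modulo the exchange binomials.
-/

open Finset MvPolynomial

section PartialDegree

/-- The degree of a monomial in the variables `x_0, …, x_i`, additive in the monomial. -/
noncomputable def partialDegree (i : ℕ) : (ℕ →₀ ℕ) →+ ℕ :=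
  ∑ j ∈ range (i + 1), Finsupp.applyAddHom j

lemma partialDegree_apply (i : ℕ) (m : ℕ →₀ ℕ) :
    partialDegree i m = ∑ j ∈ range (i + 1), m j := by
  simp [partialDegree, AddMonoidHom.finsetSum_apply]

lemma partialDegree_zero_left (m : ℕ →₀ ℕ) : partialDegree 0 m = m 0 := by
  simp [partialDegree_apply]

lemma partialDegree_succ (i : ℕ) (m : ℕ →₀ ℕ) :
    partialDegree (i + 1) m = partialDegree i m + m (i + 1) := by
  simp only [partialDegree_apply, sum_range_succ]

lemma partialDegree_single (i j : ℕ) :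
    partialDegree i (Finsupp.single j 1) = if j ≤ i then 1 else 0 := by
  simp [partialDegree_apply, Finsupp.single_apply]

lemma partialDegree_sum_single {ι : Type*} [Fintype ι] (c : ι → ℕ) (i : ℕ) :
    partialDegree i (∑ k, Finsupp.single (c k) 1) = #{k | c k ≤ i} := by
  simp only [map_sum, partialDegree_single, card_filter]

lemma ext_partialDegree {m m' : ℕ →₀ ℕ} (h : ∀ i, partialDegree i m = partialDegree i m') :
    m = m' := by
  ext i
  cases i with
  | zero => simpa only [partialDegree_zero_left] using h 0
  | succ i =>
    have hsucc := h (i + 1)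
    rw [partialDegree_succ, partialDegree_succ, h i] at hsucc
    exact Nat.add_left_cancel hsucc

lemma partialDegree_sub_single_add_single {x : ℕ →₀ ℕ} {i j : ℕ} (hij : i < j) (hx : 0 < x i)
    (k : ℕ) : partialDegree k (x - Finsupp.single i 1 + Finsupp.single j 1) +
      (if k ∈ Ico i j then 1 else 0) = partialDegree k x := by
  have hle : Finsupp.single i 1 ≤ x := Finsupp.single_le_iff.2 hx
  conv_rhs => rw [← tsub_add_cancel_of_le hle]
  simp only [map_add, partialDegree_single, mem_Ico]
  split_ifs <;> omega

lemma partialDegree_add_single_sub_single {y : ℕ →₀ ℕ} {i j : ℕ} (hij : i < j) (hy : 0 < y j)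
    (k : ℕ) : partialDegree k (y + Finsupp.single i 1 - Finsupp.single j 1) =
      partialDegree k y + (if k ∈ Ico i j then 1 else 0) := by
  have hle : Finsupp.single j 1 ≤ y := Finsupp.single_le_iff.2 hy
  rw [← tsub_add_eq_add_tsub hle]
  conv_rhs => rw [← tsub_add_cancel_of_le hle]
  simp only [map_add, partialDegree_single, mem_Ico]
  split_ifs <;> omega

end PartialDegree

lemma toFinsupp_coe_list {ι : Type*} [DecidableEq ι] (l : List ι) :
    Multiset.toFinsupp (l : Multiset ι) = (l.map (Finsupp.single · 1)).sum := by
  induction l with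
  | nil => simp
  | cons a l ih =>
    rw [← Multiset.cons_coe, ← Multiset.singleton_add, map_add, Multiset.toFinsupp_singleton, ih,
      List.map_cons, List.sum_cons]

lemma exists_eq_sum_single {ι : Type*} (u : ι →₀ ℕ) :
    ∃ (d : ℕ) (f : Fin d → ι), u = ∑ i, Finsupp.single (f i) 1 := by
  classical
  let l := u.toMultiset.toList
  refine ⟨l.length, l.get, ?_⟩
  calc u = Multiset.toFinsupp (l : Multiset ι) := by
        rw [Multiset.coe_toList, Finsupp.toMultiset_toFinsupp]
    _ = (l.map (Finsupp.single · 1)).sum := toFinsupp_coe_list l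
    _ = ∑ i, Finsupp.single (l.get i) 1 :=
        (Fin.sum_univ_fun_getElem l (Finsupp.single · 1)).symm

section Paths

variable {r : ℕ} {σ τ : Finset ℕ}

lemma card_filter_lt_orderEmbOfFin (hσ : #σ = r) (k : Fin r) :
    #{b ∈ σ | b < σ.orderEmbOfFin hσ k} = k := by
  have hmap := map_orderEmbOfFin_univ σ hσ
  generalize σ.orderEmbOfFin hσ = e at hmap ⊢
  rw [← hmap, filter_map, card_map]
  simp [filter_gt_eq_Iio]

lemma pathAbove_iff_orderEmbOfFin_le (hσ : #σ = r) (hτ : #τ = r) :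
    PathAbove σ τ ↔ ∀ k, σ.orderEmbOfFin hσ k ≤ τ.orderEmbOfFin hτ k := by
  simp only [PathAbove, orderEmbOfFin_apply, length_sort, hσ, hτ, List.get_eq_getElem]
  exact ⟨fun h k => h k k.2 k.2, fun h k hk _ => h ⟨k, hk⟩⟩

lemma eastBefore_add_card_filter_lt (hσ : 0 ∉ σ) {a : ℕ} (ha : 0 < a) :
    eastBefore σ a + #{b ∈ σ | b < a} + 1 = a := by
  have hnorth : {b ∈ σ | b < a} = {b ∈ Icc 1 (a - 1) | b ∈ σ} := by
    ext b
    simp only [mem_filter, mem_Icc]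
    have : b ∈ σ → b ≠ 0 := fun hb h => hσ (h ▸ hb)
    grind
  have hcard := card_filter_add_card_filter_not (s := Icc 1 (a - 1)) (· ∈ σ)
  rw [Nat.card_Icc] at hcard
  rw [hnorth, eastBefore]
  omega

lemma eastBefore_mono (σ : Finset ℕ) : Monotone (eastBefore σ) := fun _ _ hab =>
  card_le_card (filter_subset_filter _ (Icc_subset_Icc_right (by omega)))

/-- The vertical line on which the `k`-th north step of `σ` runs, counting `k` from `0`. -/
def northColumn (hσ : #σ = r) (k : Fin r) : ℕ := eastBefore σ (σ.orderEmbOfFin hσ k)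

lemma northColumn_mono (hσ : #σ = r) : Monotone (northColumn hσ) :=
  (eastBefore_mono σ).comp (σ.orderEmbOfFin hσ).monotone

lemma northColumn_add (hσ : #σ = r) (h0 : 0 ∉ σ) (k : Fin r) :
    northColumn hσ k + k + 1 = σ.orderEmbOfFin hσ k := by
  have hpos : 0 < σ.orderEmbOfFin hσ k :=
    Nat.pos_of_ne_zero fun h => h0 (h ▸ σ.orderEmbOfFin_mem hσ k)
  simpa only [northColumn, card_filter_lt_orderEmbOfFin] using eastBefore_add_card_filter_lt h0 hpos

lemma pathMonomial_eq_sum_northColumn (hσ : #σ = r) :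
    pathMonomial σ = ∑ k, Finsupp.single (northColumn hσ k) 1 := by
  rw [pathMonomial]
  conv_lhs => rw [← map_orderEmbOfFin_univ σ hσ, sum_map, map_orderEmbOfFin_univ σ hσ]
  rfl

lemma pathAbove_iff_northColumn_le (hσ : #σ = r) (hτ : #τ = r) (hσ0 : 0 ∉ σ) (hτ0 : 0 ∉ τ) :
    PathAbove σ τ ↔ ∀ k, northColumn hσ k ≤ northColumn hτ k := by
  simp only [pathAbove_iff_orderEmbOfFin_le hσ hτ, ← northColumn_add _ hσ0, ← northColumn_add _ hτ0,
    add_le_add_iff_right]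

lemma le_iff_card_filter_le {c c' : Fin r → ℕ} (hc : Monotone c) (hc' : Monotone c') :
    (∀ k, c k ≤ c' k) ↔ ∀ i, #{k | c' k ≤ i} ≤ #{k | c k ≤ i} := by
  refine ⟨fun h i => card_le_card fun k => ?_, fun h k => ?_⟩
  · simpa using (h k).trans
  · have hIic : Iic k ⊆ ({l | c' l ≤ c' k} : Finset (Fin r)) := fun l hl => by
      simpa using hc' (mem_Iic.1 hl)
    have hcard : (k : ℕ) < #{l | c l ≤ c' k} := by
      have := (card_le_card hIic).trans (h (c' k))
      rwa [Fin.card_Iic] at this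
    by_contra! hlt
    have hIio : ({l | c l ≤ c' k} : Finset (Fin r)) ⊆ Iio k := fun l hl => by
      simp only [mem_filter_univ] at hl
      exact mem_Iio.2 (hc.reflect_lt (hl.trans_lt hlt))
    exact hcard.not_ge ((card_le_card hIio).trans_eq (Fin.card_Iio k))

/-- The path whose `k`-th north step runs on the line `x = c k`. -/
def pathOfColumns (c : Fin r → ℕ) : Finset ℕ := univ.image fun k => c k + k + 1

variable {n : ℕ} {c : Fin r → ℕ}

lemma strictMono_add_val_add_one (hc : Monotone c) : StrictMono fun k => c k + k + 1 := by
  intro k l hkl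
  have hle := hc hkl.le
  dsimp only
  omega

lemma isLatticePath_pathOfColumns (hc : Monotone c) (hn : ∀ k, c k ≤ n) :
    IsLatticePath n r (pathOfColumns c) := by
  constructor
  · intro a ha
    obtain ⟨k, -, rfl⟩ := mem_image.1 ha
    have := hn k
    rw [mem_Icc]
    omega
  · rw [pathOfColumns, card_image_of_injective _ (strictMono_add_val_add_one hc).injective,
      card_fin]

lemma IsLatticePath.zero_notMem (hσ : IsLatticePath n r σ) : 0 ∉ σ := fun h0 => by
  simpa using hσ.1 h0

lemma northColumn_pathOfColumns (hc : Monotone c) (hcard : #(pathOfColumns c) = r) :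
    northColumn hcard = c := by
  have hsort : (fun k => c k + k + 1) = (pathOfColumns c).orderEmbOfFin hcard :=
    orderEmbOfFin_unique hcard (fun k => mem_image_of_mem _ (mem_univ k))
      (strictMono_add_val_add_one hc)
  have h0 : 0 ∉ pathOfColumns c := by simp [pathOfColumns]
  funext k
  have h := northColumn_add hcard h0 k
  rw [← congrFun hsort k] at h
  omega

lemma IsLatticePath.northColumn_le (hσ : IsLatticePath n r σ) (k : Fin r) :
    northColumn hσ.2 k ≤ n := by
  have hend := eastBefore_add_card_filter_lt hσ.zero_notMem (n + r).add_one_pos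
  have hall : {b ∈ σ | b < n + r + 1} = σ :=
    filter_true_of_mem fun b hb => Nat.lt_succ_of_le (mem_Icc.1 (hσ.1 hb)).2
  rw [hall, hσ.2] at hend
  have hmem := mem_Icc.1 (hσ.1 (σ.orderEmbOfFin_mem hσ.2 k))
  calc northColumn hσ.2 k ≤ eastBefore σ (n + r + 1) := eastBefore_mono σ (by omega)
    _ = n := by omega

lemma IsLatticePath.partialDegree_pathMonomial_eq (hσ : IsLatticePath n r σ) {i : ℕ} (hi : n ≤ i) :
    partialDegree i (pathMonomial σ) = r := by
  rw [pathMonomial_eq_sum_northColumn hσ.2, partialDegree_sum_single,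
    filter_true_of_mem fun k _ => (hσ.northColumn_le k).trans hi, card_fin]

lemma pathAbove_iff_partialDegree_le (hσ : IsLatticePath n r σ) (hτ : IsLatticePath n r τ) :
    PathAbove σ τ ↔ ∀ i, partialDegree i (pathMonomial τ) ≤ partialDegree i (pathMonomial σ) := by
  simp only [pathAbove_iff_northColumn_le hσ.2 hτ.2 hσ.zero_notMem hτ.zero_notMem,
    le_iff_card_filter_le (northColumn_mono hσ.2) (northColumn_mono hτ.2),
    pathMonomial_eq_sum_northColumn hσ.2, pathMonomial_eq_sum_northColumn hτ.2,
    partialDegree_sum_single]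

lemma exists_monotone_eq_sum_single {m : ℕ →₀ ℕ} (hm : ∀ i, n ≤ i → partialDegree i m = r) :
    ∃ c : Fin r → ℕ, Monotone c ∧ (∀ k, c k ≤ n) ∧ m = ∑ k, Finsupp.single (c k) 1 := by
  obtain ⟨d, f, rfl⟩ := exists_eq_sum_single m
  simp only [partialDegree_sum_single] at hm
  have hle : ∀ k, f k ≤ n := by
    intro k
    have heq : univ.filter (f · ≤ n) = univ.filter (f · ≤ max n (f k)) :=
      eq_of_subset_of_card_le (monotone_filter_right _ fun l _ hl => hl.trans (le_max_left _ _))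
        ((hm _ (le_max_left _ _)).trans (hm n le_rfl).symm).le
    exact (mem_filter_univ k).1 (heq.symm ▸ (mem_filter_univ k).2 (le_max_right n (f k)))
  obtain rfl : d = r := by
    rw [← hm n le_rfl, filter_true_of_mem fun k _ => hle k, card_fin]
  exact ⟨f ∘ Tuple.sort f, Tuple.monotone_sort f, fun k => hle _,
    (Equiv.sum_comp (Tuple.sort f) fun k => Finsupp.single (f k) 1).symm⟩

lemma exists_isLatticePath_pathMonomial_eq {m : ℕ →₀ ℕ} (hm : ∀ i, n ≤ i → partialDegree i m = r) :
    ∃ σ, IsLatticePath n r σ ∧ pathMonomial σ = m := by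
  obtain ⟨c, hc, hn, rfl⟩ := exists_monotone_eq_sum_single hm
  have hpath := isLatticePath_pathOfColumns hc hn
  exact ⟨_, hpath, by rw [pathMonomial_eq_sum_northColumn hpath.2, northColumn_pathOfColumns hc]⟩

/-- Monomials whose partial degrees lie between `L` and `U`. The bases of a lattice path
polymatroid are of this form, and only this description of them enters the algebra. -/
def InStrip (L U : ℕ → ℕ) (m : ℕ →₀ ℕ) : Prop :=
  ∀ i, L i ≤ partialDegree i m ∧ partialDegree i m ≤ U i

theorem isLPBasis_eq_inStrip {α ω : Finset ℕ} (hα : IsLatticePath n r α)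
    (hω : IsLatticePath n r ω) :
    IsLPBasis n r α ω =
      InStrip (partialDegree · (pathMonomial ω)) (partialDegree · (pathMonomial α)) := by
  funext m
  refine propext ⟨?_, fun hm => ?_⟩
  · rintro ⟨σ, hσ, hασ, hσω, rfl⟩ i
    exact ⟨(pathAbove_iff_partialDegree_le hσ hω).1 hσω i,
      (pathAbove_iff_partialDegree_le hα hσ).1 hασ i⟩
  · obtain ⟨σ, hσ, rfl⟩ := exists_isLatticePath_pathMonomial_eq (n := n) (r := r) fun i hi =>
      le_antisymm ((hm i).2.trans_eq (hα.partialDegree_pathMonomial_eq hi))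
        ((hω.partialDegree_pathMonomial_eq hi).symm.trans_le (hm i).1)
    exact ⟨σ, hσ, (pathAbove_iff_partialDegree_le hα hσ).2 fun i => (hm i).2,
      (pathAbove_iff_partialDegree_le hσ hω).2 fun i => (hm i).1, rfl⟩

end Paths

section ToricIdeal

lemma aeval_monomial_monomial_one {ι τ R : Type*} [CommSemiring R] (w : ι → τ →₀ ℕ) (u : ι →₀ ℕ) :
    aeval (R := R) (fun i => monomial (w i) (1 : R)) (monomial u (1 : R)) =
      monomial (Finsupp.linearCombination ℕ w u) 1 := by
  rw [aeval_monomial, map_one, one_mul, Finsupp.linearCombination_apply,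
    monomial_finsupp_sum_index, C_1, one_mul]
  simp only [monomial_pow, one_pow]

theorem ker_aeval_monomial_le {ι τ R : Type*} [CommRing R] (w : ι → τ →₀ ℕ)
    (I : Ideal (MvPolynomial ι R))
    (hI : ∀ u v, Finsupp.linearCombination ℕ w u = Finsupp.linearCombination ℕ w v →
      monomial u 1 - monomial v 1 ∈ I) :
    RingHom.ker (aeval fun i => monomial (w i) (1 : R) : MvPolynomial ι R →ₐ[R] _) ≤ I := by
  set φ : MvPolynomial ι R →ₐ[R] MvPolynomial τ R := aeval fun i => monomial (w i) (1 : R)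
  -- `ψ` lifts each monomial in the image back to one fixed preimage; then `p ≡ ψ (φ p)` modulo `I`.
  let s := Function.invFun (Finsupp.linearCombination ℕ w)
  let ψ : MvPolynomial τ R →ₗ[R] MvPolynomial ι R :=
    (basisMonomials τ R).constr R fun t => monomial (s t) 1
  have hψ : ∀ t, ψ (monomial t 1) = monomial (s t) 1 := (basisMonomials τ R).constr_basis R _
  have hsub : ∀ p, p - ψ (φ p) ∈ I := fun p => by
    induction p using MvPolynomial.induction_on' with
    | monomial u a =>
      have hmem := hI u (s (Finsupp.linearCombination ℕ w u))
        (Function.invFun_eq ⟨u, rfl⟩).symm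
      have hu : monomial u a = a • monomial u (1 : R) := by rw [smul_monomial, smul_eq_mul, mul_one]
      rw [hu, map_smul, map_smul, ← smul_sub, aeval_monomial_monomial_one, hψ]
      exact Submodule.smul_of_tower_mem I a hmem
    | add p q hp hq =>
      rw [map_add, map_add, add_sub_add_comm]
      exact I.add_mem hp hq
  intro p hp
  simpa only [RingHom.mem_ker.1 hp, map_zero, sub_zero] using hsub p

variable {P : (ℕ →₀ ℕ) → Prop}

lemma toricMapP_prod_X {d : ℕ} (f : Fin d → {m // P m}) :
    toricMapP P (∏ i, X (f i)) = monomial (∑ i, (f i).1) 1 := by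
  simp only [toricMapP, map_prod, aeval_X, monomial_sum_one]

theorem ker_toricMapP_le (I : Ideal (MvPolynomial {m // P m} ℂ))
    (hI : ∀ (d e : ℕ) (f : Fin d → {m // P m}) (g : Fin e → {m // P m}),
      ∑ i, (f i).1 = ∑ i, (g i).1 → ∏ i, X (f i) - ∏ i, X (g i) ∈ I) :
    RingHom.ker (toricMapP P) ≤ I := by
  refine ker_aeval_monomial_le Subtype.val I fun u v huv => ?_
  obtain ⟨d, f, rfl⟩ := exists_eq_sum_single u
  obtain ⟨e, g, rfl⟩ := exists_eq_sum_single v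
  simp only [map_sum, Finsupp.linearCombination_single, one_smul] at huv
  rw [monomial_sum_one, monomial_sum_one]
  exact hI d e f g huv

lemma SymExchP.add_eq {m m' l l' : ℕ →₀ ℕ} (h : SymExchP P m m' l l') : l + l' = m + m' := by
  obtain ⟨-, -, i, j, hi, hj, rfl, rfl, -, -⟩ := h
  have hm : Finsupp.single i 1 ≤ m := Finsupp.single_le_iff.2 (by omega)
  have hm' : Finsupp.single j 1 ≤ m' := Finsupp.single_le_iff.2 (by omega)
  rw [← tsub_add_eq_add_tsub hm', add_add_add_comm, add_comm (Finsupp.single j 1),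
    ← add_add_add_comm, tsub_add_cancel_of_le hm, tsub_add_cancel_of_le hm']

theorem span_SEBP_le_ker : Ideal.span (SEBP P) ≤ RingHom.ker (toricMapP P) := by
  rw [Ideal.span_le]
  rintro _ ⟨m, m', l, l', h, rfl⟩
  simp [RingHom.mem_ker, toricMapP, monomial_mul, h.add_eq]

lemma sum_eq_of_prod_X_sub_mem_span {d e : ℕ} {f : Fin d → {m // P m}} {g : Fin e → {m // P m}}
    (h : ∏ i, X (f i) - ∏ i, X (g i) ∈ Ideal.span (SEBP P)) :
    ∑ i, (f i).1 = ∑ i, (g i).1 := by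
  have hker := RingHom.mem_ker.1 (span_SEBP_le_ker h)
  rw [map_sub, toricMapP_prod_X, toricMapP_prod_X, sub_eq_zero] at hker
  exact monomial_left_injective one_ne_zero hker

end ToricIdeal

section Exchange

variable {L U : ℕ → ℕ} {n : ℕ}

lemma exists_maximal_run {Q : ℕ → Prop} {p : ℕ} (hp : Q p) (hn : ¬Q n) (hpn : p ≤ n) :
    ∃ i j, p ∈ Ico i j ∧ (∀ k ∈ Ico i j, Q k) ∧ (∀ l, l + 1 = i → ¬Q l) ∧ ¬Q j := by
  classical
  have hex_left : ∃ i, i ≤ p ∧ ∀ k ∈ Icc i p, Q k := ⟨p, le_rfl, fun k hk => by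
    rwa [le_antisymm (mem_Icc.1 hk).2 (mem_Icc.1 hk).1]⟩
  have hex_right : ∃ j, p ≤ j ∧ ¬Q j := ⟨n, hpn, hn⟩
  obtain ⟨hip, hleft⟩ := Nat.find_spec hex_left
  obtain ⟨hpj, hj⟩ := Nat.find_spec hex_right
  refine ⟨Nat.find hex_left, Nat.find hex_right, ?_, fun k hk => ?_, fun l hl hQ => ?_, hj⟩
  · exact mem_Ico.2 ⟨hip, hpj.lt_of_ne fun h => hj (h ▸ hp)⟩
  · rcases le_total k p with hkp | hpk
    · exact hleft k (mem_Icc.2 ⟨(mem_Ico.1 hk).1, hkp⟩)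
    · exact not_not.1 fun hQ => Nat.find_min hex_right (mem_Ico.1 hk).2 ⟨hpk, hQ⟩
  · refine Nat.find_min hex_left (m := l) (by omega) ⟨by omega, fun k hk => ?_⟩
    rcases (mem_Icc.1 hk).1.eq_or_lt with rfl | hlk
    · exact hQ
    · exact hleft k (mem_Icc.2 ⟨by omega, (mem_Icc.1 hk).2⟩)

lemma lt_apply_of_run_start {x y : ℕ →₀ ℕ} {s i : ℕ}
    (hi : partialDegree i y + s < partialDegree i x)
    (hpred : ∀ l, l + 1 = i → ¬partialDegree l y + s < partialDegree l x) : y i < x i := by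
  cases i with
  | zero =>
    rw [partialDegree_zero_left, partialDegree_zero_left] at hi
    omega
  | succ l =>
    have := hpred l rfl
    rw [partialDegree_succ, partialDegree_succ] at hi
    omega

lemma lt_apply_of_run_end {x y : ℕ →₀ ℕ} {s j : ℕ}
    (hpred : partialDegree j y + s < partialDegree j x)
    (hj : ¬partialDegree (j + 1) y + s < partialDegree (j + 1) x) : x (j + 1) < y (j + 1) := by
  rw [partialDegree_succ, partialDegree_succ] at hj
  omega

/-- Passing from `x, y` to `x', y'` moves one unit of the `k`-th partial degree from `x` to `y`,
at a place `k` where `x` exceeds `y` by more than `s`. -/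
def TransfersUnitAt (s : ℕ) (x y x' y' : ℕ →₀ ℕ) (k : ℕ) : Prop :=
  partialDegree k y + s < partialDegree k x ∧ partialDegree k x' + 1 = partialDegree k x ∧
    partialDegree k y' = partialDegree k y + 1

lemma InStrip.of_transfersUnitAt {x y x' y' : ℕ →₀ ℕ} {s : ℕ} (hx : InStrip L U x)
    (hy : InStrip L U y)
    (h : ∀ k, (partialDegree k x' = partialDegree k x ∧ partialDegree k y' = partialDegree k y) ∨
      TransfersUnitAt s x y x' y' k) :
    InStrip L U x' ∧ InStrip L U y' := by
  simp only [TransfersUnitAt] at h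
  constructor <;>
  · intro k
    have hxk := hx k
    have hyk := hy k
    have hk := h k
    omega

theorem exists_symExchP {x y : ℕ →₀ ℕ} (hx : InStrip L U x) (hy : InStrip L U y) {s p : ℕ}
    (hp : partialDegree p y + s < partialDegree p x) (hpn : p ≤ n)
    (hn : partialDegree n x ≤ partialDegree n y + s) :
    ∃ x' y', SymExchP (InStrip L U) x y x' y' ∧ TransfersUnitAt s x y x' y' p ∧
      ∀ k, (partialDegree k x' = partialDegree k x ∧ partialDegree k y' = partialDegree k y) ∨
        TransfersUnitAt s x y x' y' k := by
  obtain ⟨i, j, hpij, hrun, hi, hj⟩ := exists_maximal_run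
    (Q := fun k => partialDegree k y + s < partialDegree k x) hp hn.not_gt hpn
  have hij : i < j := (mem_Ico.1 hpij).1.trans_lt (mem_Ico.1 hpij).2
  have hxi : y i < x i := lt_apply_of_run_start (hrun i (left_mem_Ico.2 hij)) hi
  have hyj : x j < y j := by
    obtain ⟨l, rfl⟩ := Nat.exists_eq_add_one_of_ne_zero hij.ne_bot
    exact lt_apply_of_run_end (hrun l (mem_Ico.2 ⟨by omega, l.lt_add_one⟩)) hj
  have hx' := partialDegree_sub_single_add_single hij (Nat.zero_lt_of_lt hxi)
  have hy' := partialDegree_add_single_sub_single hij (Nat.zero_lt_of_lt hyj)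
  set x' := x - Finsupp.single i 1 + Finsupp.single j 1
  set y' := y + Finsupp.single i 1 - Finsupp.single j 1
  have hmem : ∀ k ∈ Ico i j, TransfersUnitAt s x y x' y' k := fun k hk =>
    ⟨hrun k hk, by simpa only [if_pos hk] using hx' k, by simpa only [if_pos hk] using hy' k⟩
  have htransfer : ∀ k, (partialDegree k x' = partialDegree k x ∧
      partialDegree k y' = partialDegree k y) ∨ TransfersUnitAt s x y x' y' k := fun k => by
    by_cases hk : k ∈ Ico i j
    · exact Or.inr (hmem k hk)
    · exact Or.inl ⟨by simpa only [if_neg hk, add_zero] using hx' k,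
        by simpa only [if_neg hk, add_zero] using hy' k⟩
  obtain ⟨hx'_strip, hy'_strip⟩ := InStrip.of_transfersUnitAt hx hy htransfer
  exact ⟨x', y', ⟨hx, hy, i, j, hxi, hyj, rfl, rfl, hx'_strip, hy'_strip⟩, hmem p hpij, htransfer⟩

end Exchange

section Sorting

variable {ι : Type*} [Fintype ι]

@[to_additive]
lemma prod_eq_mul_mul_prod_compl_pair {M : Type*} [CommMonoid M] [DecidableEq ι] {i j : ι}
    (hij : i ≠ j) (g : ι → M) : ∏ l, g l = g i * g j * ∏ l ∈ {i, j}ᶜ, g l := by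
  rw [← prod_mul_prod_compl {i, j} g, prod_pair hij]

lemma le_of_antitone_of_le_add_one [LinearOrder ι] {a b : ι → ℕ} (ha : Antitone a)
    (hb : Antitone b) (ha1 : ∀ i j, a i ≤ a j + 1) (hb1 : ∀ i j, b i ≤ b j + 1)
    (hsum : ∑ i, a i = ∑ i, b i) (i : ι) : a i ≤ b i := by
  by_contra! hi
  have hle : ∀ j, b j ≤ a j := fun j => by
    have haj := ha1 i j
    have hbj := hb1 j i
    rcases le_total i j with hij | hji
    · have := hb hij
      omega
    · have := ha hji
      omega
  exact (sum_lt_sum (fun j _ => hle j) ⟨i, mem_univ i, hi⟩).ne' hsum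

lemma eq_of_antitone_of_le_add_one [LinearOrder ι] {a b : ι → ℕ} (ha : Antitone a)
    (hb : Antitone b) (ha1 : ∀ i j, a i ≤ a j + 1) (hb1 : ∀ i j, b i ≤ b j + 1)
    (hsum : ∑ i, a i = ∑ i, b i) : a = b :=
  funext fun i => le_antisymm (le_of_antitone_of_le_add_one ha hb ha1 hb1 hsum i)
    (le_of_antitone_of_le_add_one hb ha hb1 ha1 hsum.symm i)

variable {d : ℕ}

/-- A family of monomials is sorted if, in every partial degree, its members decrease weakly and
differ by at most `1`. These are the normal forms for rewriting by symmetric exchanges. -/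
def IsSorted (f : Fin d → ℕ →₀ ℕ) : Prop :=
  ∀ i j, i < j → ∀ k, partialDegree k (f j) ≤ partialDegree k (f i) ∧
    partialDegree k (f i) ≤ partialDegree k (f j) + 1

lemma IsSorted.antitone {f : Fin d → ℕ →₀ ℕ} (hf : IsSorted f) (k : ℕ) :
    Antitone fun i => partialDegree k (f i) :=
  antitone_iff_forall_lt.2 fun i j hij => (hf i j hij k).1

lemma IsSorted.le_add_one {f : Fin d → ℕ →₀ ℕ} (hf : IsSorted f) (k : ℕ) (i j : Fin d) :
    partialDegree k (f i) ≤ partialDegree k (f j) + 1 := by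
  rcases lt_or_ge i j with hij | hji
  · exact (hf i j hij k).2
  · exact (hf.antitone k hji).trans (Nat.le_succ _)

theorem IsSorted.eq_of_sum_eq {f g : Fin d → ℕ →₀ ℕ} (hf : IsSorted f) (hg : IsSorted g)
    (hsum : ∑ i, f i = ∑ i, g i) : f = g := by
  funext i
  refine ext_partialDegree fun k => ?_
  refine congrFun (eq_of_antitone_of_le_add_one (hf.antitone k) (hg.antitone k) (hf.le_add_one k)
    (hg.le_add_one k) ?_) i
  simpa only [map_sum] using congrArg (partialDegree k) hsum

/-- A strictly convex potential whose minima are the sorted families: the summand `i` breaks ties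
between members of the family that differ by `1`. -/
noncomputable def sortingWeight (n : ℕ) (f : Fin d → ℕ →₀ ℕ) : ℕ :=
  ∑ k ∈ range n, ∑ i, (d * partialDegree k (f i) + i) ^ 2

lemma sq_add_sq_lt_of_lt {a b d : ℕ} (hd : 0 < d) (h : b < a) :
    a ^ 2 + (b + d) ^ 2 < (a + d) ^ 2 + b ^ 2 := by
  nlinarith [Nat.mul_lt_mul_of_pos_right h hd]

lemma TransfersUnitAt.sq_add_sq_lt {s : ℕ} {x y x' y' : ℕ →₀ ℕ} {k : ℕ}
    (h : TransfersUnitAt s x y x' y' k) {i j : Fin d} (hs : (j : ℕ) < d * s + i) :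
    (d * partialDegree k x' + i) ^ 2 + (d * partialDegree k y' + j) ^ 2 <
      (d * partialDegree k x + i) ^ 2 + (d * partialDegree k y + j) ^ 2 := by
  obtain ⟨hlt, hx', hy'⟩ := h
  have hle : d * (partialDegree k y + s) ≤ d * partialDegree k x' :=
    Nat.mul_le_mul_left d (by omega)
  have hlt : d * partialDegree k y + j < d * partialDegree k x' + i := by
    rw [mul_add] at hle
    omega
  convert sq_add_sq_lt_of_lt j.pos hlt using 3
  · rw [hy']; ring
  · rw [← hx']; ring

lemma sortingWeight_lt {n s p : ℕ} {f g : Fin d → ℕ →₀ ℕ} {i j : Fin d} (hij : i ≠ j)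
    (hs : (j : ℕ) < d * s + i) (hfg : ∀ l ∈ ({i, j}ᶜ : Finset (Fin d)), g l = f l) (hpn : p < n)
    (hp : TransfersUnitAt s (f i) (f j) (g i) (g j) p)
    (h : ∀ k, (partialDegree k (g i) = partialDegree k (f i) ∧
      partialDegree k (g j) = partialDegree k (f j)) ∨
        TransfersUnitAt s (f i) (f j) (g i) (g j) k) :
    sortingWeight n g < sortingWeight n f := by
  simp only [sortingWeight, sum_eq_add_add_sum_compl_pair hij]
  have hrest : ∀ k, ∑ l ∈ {i, j}ᶜ, (d * partialDegree k (g l) + l) ^ 2 =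
      ∑ l ∈ {i, j}ᶜ, (d * partialDegree k (f l) + l) ^ 2 := fun k =>
    sum_congr rfl fun l hl => by rw [hfg l hl]
  simp only [hrest]
  refine sum_lt_sum (fun k _ => ?_) ⟨p, mem_range.2 hpn, ?_⟩
  · rcases h k with ⟨hi, hj⟩ | hk
    · rw [hi, hj]
    · exact Nat.add_le_add_right (hk.sq_add_sq_lt hs).le _
  · exact Nat.add_lt_add_right (hp.sq_add_sq_lt hs) _

variable {L U : ℕ → ℕ} {n r : ℕ}

lemma InStrip.partialDegree_eq {m : ℕ →₀ ℕ} (hm : InStrip L U m) {i : ℕ} (hL : L i = r)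
    (hU : U i = r) : partialDegree i m = r :=
  le_antisymm ((hm i).2.trans_eq hU) (hL.symm.trans_le (hm i).1)

lemma SymExchP.prod_X_sub_mem_span {P : (ℕ →₀ ℕ) → Prop} {f g : Fin d → {m // P m}} {i j : Fin d}
    (hij : i ≠ j) (hfg : ∀ l ∈ ({i, j}ᶜ : Finset (Fin d)), g l = f l)
    (h : SymExchP P (f i) (f j) (g i) (g j)) :
    ∏ l, X (f l) - ∏ l, X (g l) ∈ Ideal.span (SEBP P) := by
  have hrest : ∏ l ∈ {i, j}ᶜ, (X (g l) : MvPolynomial {m // P m} ℂ) = ∏ l ∈ {i, j}ᶜ, X (f l) :=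
    prod_congr rfl fun l hl => by rw [hfg l hl]
  rw [prod_eq_mul_mul_prod_compl_pair hij, prod_eq_mul_mul_prod_compl_pair hij (fun l => X (g l)),
    hrest, ← sub_mul]
  exact Ideal.mul_mem_right _ _ (Ideal.subset_span ⟨f i, f j, g i, g j, h, rfl⟩)

lemma exists_sortingWeight_lt (hL : ∀ i, n ≤ i → L i = r) (hU : ∀ i, n ≤ i → U i = r)
    (f : Fin d → {m // InStrip L U m}) {i j : Fin d} {s p : ℕ} (hs : (j : ℕ) < d * s + i)
    (hp : partialDegree p (f j).1 + s < partialDegree p (f i).1) :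
    ∃ g : Fin d → {m // InStrip L U m},
      sortingWeight n (fun l => (g l).1) < sortingWeight n (fun l => (f l).1) ∧
      ∏ l, X (f l) - ∏ l, X (g l) ∈ Ideal.span (SEBP (InStrip L U)) := by
  have hend : ∀ k, n ≤ k → ∀ l, partialDegree k (f l).1 = r := fun k hk l =>
    (f l).2.partialDegree_eq (hL k hk) (hU k hk)
  have hpn : p < n := by
    by_contra! hnp
    rw [hend p hnp, hend p hnp] at hp
    omega
  have hij : i ≠ j := by
    rintro rfl
    omega
  obtain ⟨x', y', hexch, hxy, htransfer⟩ := exists_symExchP (f i).2 (f j).2 hp hpn.le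
    (by rw [hend n le_rfl, hend n le_rfl]; exact Nat.le_add_right r s)
  obtain ⟨-, -, -, -, -, -, -, -, hx', hy'⟩ := id hexch
  let g := Function.update (Function.update f i ⟨x', hx'⟩) j ⟨y', hy'⟩
  have hgi : g i = ⟨x', hx'⟩ := by simp [g, hij]
  have hgj : g j = ⟨y', hy'⟩ := by simp [g]
  have hg : ∀ l ∈ ({i, j}ᶜ : Finset (Fin d)), g l = f l := fun l hl => by
    simp only [mem_compl, mem_insert, mem_singleton, not_or] at hl
    simp [g, hl.1, hl.2]
  refine ⟨g, sortingWeight_lt (s := s) (p := p) hij hs (fun l hl => by rw [hg l hl]) hpn ?_ ?_,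
    SymExchP.prod_X_sub_mem_span hij hg ?_⟩ <;> simpa only [hgi, hgj]

theorem exists_isSorted (hL : ∀ i, n ≤ i → L i = r) (hU : ∀ i, n ≤ i → U i = r)
    (f : Fin d → {m // InStrip L U m}) :
    ∃ g : Fin d → {m // InStrip L U m}, IsSorted (fun i => (g i).1) ∧
      ∏ i, X (f i) - ∏ i, X (g i) ∈ Ideal.span (SEBP (InStrip L U)) := by
  induction hw : sortingWeight n (fun i => (f i).1) using Nat.strong_induction_on
    generalizing f with | _ w ih =>
  subst hw
  by_cases hf : IsSorted fun i => (f i).1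
  · exact ⟨f, hf, by rw [sub_self]; exact zero_mem _⟩
  obtain ⟨g, hlt, hfg⟩ : ∃ g : Fin d → {m // InStrip L U m},
      sortingWeight n (fun i => (g i).1) < sortingWeight n (fun i => (f i).1) ∧
      ∏ i, X (f i) - ∏ i, X (g i) ∈ Ideal.span (SEBP (InStrip L U)) := by
    simp only [IsSorted, not_forall, Classical.not_and_iff_not_or_not, not_le] at hf
    obtain ⟨i, j, hij, k, hlt | hgap⟩ := hf
    · exact exists_sortingWeight_lt hL hU f (s := 0) (by omega) hlt
    · exact exists_sortingWeight_lt hL hU f (s := 1) (by omega) hgap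
  obtain ⟨g', hg', hgg'⟩ := ih _ hlt g rfl
  exact ⟨g', hg', by simpa only [sub_add_sub_cancel] using Ideal.add_mem _ hfg hgg'⟩

lemma partialDegree_sum_eq_mul (hL : L n = r) (hU : U n = r) (f : Fin d → {m // InStrip L U m}) :
    partialDegree n (∑ i, (f i).1) = d * r := by
  simp only [map_sum, (f _).2.partialDegree_eq hL hU, sum_const, card_fin, smul_eq_mul]

theorem prod_X_sub_mem_span_of_sum_eq (hr : 0 < r) (hL : ∀ i, n ≤ i → L i = r)
    (hU : ∀ i, n ≤ i → U i = r) {d e : ℕ} (f : Fin d → {m // InStrip L U m})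
    (g : Fin e → {m // InStrip L U m}) (hsum : ∑ i, (f i).1 = ∑ i, (g i).1) :
    ∏ i, X (f i) - ∏ i, X (g i) ∈ Ideal.span (SEBP (InStrip L U)) := by
  obtain rfl : d = e := Nat.eq_of_mul_eq_mul_right hr <| by
    rw [← partialDegree_sum_eq_mul (hL n le_rfl) (hU n le_rfl) f, hsum,
      partialDegree_sum_eq_mul (hL n le_rfl) (hU n le_rfl) g]
  obtain ⟨f', hf', hff'⟩ := exists_isSorted hL hU f
  obtain ⟨g', hg', hgg'⟩ := exists_isSorted hL hU g
  have hsum' : ∑ i, (f' i).1 = ∑ i, (g' i).1 := by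
    rw [← sum_eq_of_prod_X_sub_mem_span hff', hsum, sum_eq_of_prod_X_sub_mem_span hgg']
  obtain rfl : f' = g' := funext fun i => Subtype.ext (congrFun (hf'.eq_of_sum_eq hg' hsum') i)
  simpa only [sub_sub_sub_cancel_right] using Ideal.sub_mem _ hff' hgg'

theorem ker_toricMapP_inStrip (hr : 0 < r) (hL : ∀ i, n ≤ i → L i = r)
    (hU : ∀ i, n ≤ i → U i = r) :
    RingHom.ker (toricMapP (InStrip L U)) = Ideal.span (SEBP (InStrip L U)) :=
  le_antisymm
    (ker_toricMapP_le _ fun _ _ f g hfg => prod_X_sub_mem_span_of_sum_eq hr hL hU f g hfg)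
    span_SEBP_le_ker

end Sorting

/-- The toric ideal of a lattice path polymatroid is generated by its symmetric
exchange binomials. -/
theorem stmt4 (n r : ℕ) (hn : 0 < n) (hr : 0 < r) (α ω : Finset ℕ)
    (hα : IsLatticePath n r α) (hω : IsLatticePath n r ω) (hαω : PathAbove α ω) :
    RingHom.ker (toricMapP (IsLPBasis n r α ω)) = Ideal.span (SEBP (IsLPBasis n r α ω)) := by
  rw [isLPBasis_eq_inStrip hα hω]
  exact ker_toricMapP_inStrip hr (fun _ hi => hω.partialDegree_pathMonomial_eq hi)
    fun _ hi => hα.partialDegree_pathMonomial_eq hi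
end

section
/- Let α ⪰ ω be lattice paths from (0,0) to (n,r) and let M(α,ω) be the associated lattice path matroid. Then the toric ideal of M(α,ω) (the kernel of the toric map φ) is generated by the symmetric exchange binomials of M(α,ω). -/
/-- The bases of the lattice path matroid `M(α, ω)`: the sets `N(σ)` for
lattice paths `σ` with `α ⪰ σ ⪰ ω`. -/
def IsLPMBasis (n r : ℕ) (α ω : Finset ℕ) (B : Finset ℕ) : Prop :=
  IsLatticePath n r B ∧ PathAbove α B ∧ PathAbove B ω

/-- `C, C'` are obtained from bases `B, B'` by a symmetric exchange, relative
to a basis predicate `P`. -/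
def SymExchM (P : Finset ℕ → Prop) (B B' C C' : Finset ℕ) : Prop :=
  P B ∧ P B' ∧ ∃ i j,
    i ∈ B ∧ i ∉ B' ∧ j ∈ B' ∧ j ∉ B ∧
    C = insert j (B.erase i) ∧ C' = insert i (B'.erase j) ∧
    P C ∧ P C'

/-- The toric map of a matroid with bases `P`: sends `Y_B` to `∏_{i ∈ B} x_i`. -/
noncomputable def toricMapM (P : Finset ℕ → Prop) :
    MvPolynomial {B : Finset ℕ // P B} ℂ →ₐ[ℂ] MvPolynomial ℕ ℂ :=
  MvPolynomial.aeval fun B => ∏ i ∈ B.1, MvPolynomial.X i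

/-- The set of symmetric exchange binomials of a matroid with bases `P`. -/
def SEBM (P : Finset ℕ → Prop) : Set (MvPolynomial {B : Finset ℕ // P B} ℂ) :=
  { p | ∃ B B' C C' : {B : Finset ℕ // P B},
      SymExchM P B.1 B'.1 C.1 C'.1 ∧
      p = MvPolynomial.X B * MvPolynomial.X B' - MvPolynomial.X C * MvPolynomial.X C' }

/-!
A path is determined by its north counts (the number of north steps before each position), and the
paths between `α` and `ω` are those whose counts lie between the counts of `ω` and of `α`. If the
counts of two bases `B`, `C` satisfy `c + t ≤ b` somewhere (`t ≥ 1`), exchanging the endpoints of a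
maximal interval on which this inequality holds lowers `b` and raises `c` by one on that interval
and nowhere else, so the counts stay between the old ones and both results are bases.

Distinguish one member `B` of a multiset of bases and apply these exchanges as long as they decrease
`b² + ∑ c (c + 1)`, summed over all positions. When no such exchange is left, `c ≤ b ≤ c + 1` for
every other member, so at each position `b` is the rounded-up average of all the counts. It depends
only on the number of bases and on the multiset union, that is, on the image of the monomial under
the toric map. Hence two monomials with the same image can be brought to share the factor `Y_B`, and
one concludes by induction on the degree.
-/

open Finset MvPolynomial

section NorthCount

/-- The number of north steps of the path `B` at positions `< k`. The inequality is strict so that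
the count vanishes at `0` and jumps between `k` and `k + 1` exactly when `k ∈ B`. -/
def northCount (B : Finset ℕ) : ℕ → ℕ := Nat.count (· ∈ B)

variable {B C : Finset ℕ} {i j k l N t : ℕ}

lemma northCount_zero (B : Finset ℕ) : northCount B 0 = 0 := Nat.count_zero _

lemma northCount_succ (B : Finset ℕ) (k : ℕ) :
    northCount B (k + 1) = northCount B k + if k ∈ B then 1 else 0 := Nat.count_succ _ k

lemma northCount_eq_sum (B : Finset ℕ) (k : ℕ) :
    northCount B k = ∑ x ∈ B, if x < k then 1 else 0 := by
  rw [← card_filter, northCount, Nat.count_eq_card_filter_range]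
  congr 1
  ext x
  simp only [mem_filter, mem_range, and_comm]

lemma northCount_le_card (B : Finset ℕ) (k : ℕ) : northCount B k ≤ #B := by
  rw [northCount_eq_sum, ← card_filter]
  exact card_filter_le _ _

lemma northCount_eq_card (hB : B ⊆ range N) : northCount B N = #B := by
  rw [northCount_eq_sum, ← card_filter, filter_true_of_mem fun x hx => mem_range.1 (hB hx)]

lemma lt_of_northCount_ne (hB : B ⊆ range N) (hC : C ⊆ range N) (hcard : #B = #C)
    (hne : northCount B k ≠ northCount C k) : k < N := by
  by_contra! hNk
  rw [northCount_eq_card (hB.trans (range_mono hNk)),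
    northCount_eq_card (hC.trans (range_mono hNk))] at hne
  exact hne hcard

lemma northCount_injective : Function.Injective northCount := fun B C h => by
  ext x
  rw [← Nat.count_succ_eq_succ_count_iff (p := (· ∈ B)),
    ← Nat.count_succ_eq_succ_count_iff (p := (· ∈ C))]
  exact iff_of_eq (congrArg (fun f : ℕ → ℕ => f (x + 1) = f x + 1) h)

lemma northCount_insert_erase (hi : i ∈ B) (hj : j ∉ B) (l : ℕ) :
    northCount (insert j (B.erase i)) l + (if i < l then 1 else 0) =
      northCount B l + if j < l then 1 else 0 := by
  simp only [northCount_eq_sum]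
  rw [sum_insert (fun h => hj (mem_of_mem_erase h)), ← add_sum_erase B _ hi]
  ring

lemma northCount_delay (hi : i ∈ B) (hj : j ∉ B) (hij : i < j) (l : ℕ) :
    northCount (insert j (B.erase i)) l + (if l ∈ Ioc i j then 1 else 0) = northCount B l := by
  have := northCount_insert_erase hi hj l
  simp only [mem_Ioc]
  split_ifs at this ⊢ <;> omega

lemma northCount_advance (hi : i ∉ C) (hj : j ∈ C) (hij : i < j) (l : ℕ) :
    northCount (insert i (C.erase j)) l = northCount C l + if l ∈ Ioc i j then 1 else 0 := by
  have := northCount_insert_erase hj hi l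
  simp only [mem_Ioc]
  split_ifs at this ⊢ <;> omega

lemma sort_get_lt_iff (B : Finset ℕ) (h : k < (B.sort (· ≤ ·)).length) :
    (B.sort (· ≤ ·)).get ⟨k, h⟩ < l ↔ k < northCount B l := by
  have hfin : (Set.ofPred (· ∈ B)).Finite := B.finite_toSet
  have hB : hfin.toFinset = B := by ext; simp
  have hk : k < #hfin.toFinset := by rwa [hB, ← length_sort (· ≤ ·)]
  have hnth : (B.sort (· ≤ ·)).get ⟨k, h⟩ = Nat.nth (· ∈ B) k := by
    rw [Nat.nth_eq_getD_sort hfin, hB, List.getD_eq_getElem _ _ h, List.get_eq_getElem]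
  rw [hnth]
  refine ⟨fun hlt => ?_, Nat.nth_lt_of_lt_count⟩
  calc k = northCount B (Nat.nth (· ∈ B) k) := (Nat.count_nth_of_lt_card_finite hfin hk).symm
    _ < northCount B l := Nat.count_strict_mono (Nat.nth_mem_of_lt_card hfin hk) hlt

lemma pathAbove_iff_northCount_le (h : #B = #C) :
    PathAbove B C ↔ northCount C ≤ northCount B := by
  constructor
  · intro habove l
    by_contra! hlt
    have hC : northCount B l < (C.sort (· ≤ ·)).length := by
      rw [length_sort]
      exact hlt.trans_le (northCount_le_card C l)
    have hB : northCount B l < (B.sort (· ≤ ·)).length := by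
      rwa [length_sort, h, ← length_sort (· ≤ ·)]
    have hget := (habove _ hB hC).trans_lt ((sort_get_lt_iff C hC).2 hlt)
    exact lt_irrefl _ ((sort_get_lt_iff B hB).1 hget)
  · intro hle k hB hC
    rw [← Nat.lt_succ_iff, sort_get_lt_iff]
    exact ((sort_get_lt_iff C hC).1 (Nat.lt_succ_self _)).trans_le (hle _)

lemma exists_maximal_Ioc {p : ℕ → Prop} (h0 : ¬p 0) (hk : p k) (hkN : k ≤ N) (hN : ¬p N) :
    ∃ i j, k ∈ Ioc i j ∧ ¬p i ∧ ¬p (j + 1) ∧ ∀ l ∈ Ioc i j, p l := by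
  classical
  let i := Nat.findGreatest (¬p ·) k
  have hpi : ¬p i := Nat.findGreatest_spec (P := (¬p ·)) (Nat.zero_le k) h0
  have hik : i < k := (Nat.findGreatest_le k).lt_of_ne fun h : i = k => hpi (by rwa [h])
  have hex : ∃ m, k ≤ m ∧ ¬p m := ⟨N, hkN, hN⟩
  obtain ⟨hkm, hpm⟩ := Nat.find_spec hex
  have hkm' : k < Nat.find hex := hkm.lt_of_ne fun h => hpm (h ▸ hk)
  obtain ⟨j, hj⟩ := Nat.exists_eq_add_one_of_ne_zero (Nat.ne_zero_of_lt hkm')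
  refine ⟨i, j, mem_Ioc.2 ⟨hik, by omega⟩, hpi, hj ▸ hpm, fun l hl => ?_⟩
  obtain ⟨hil, hlj⟩ := mem_Ioc.1 hl
  by_contra hpl
  obtain hlk | hkl := le_total l k
  · exact Nat.findGreatest_is_greatest hil hlk hpl
  · exact Nat.find_min hex (by omega) ⟨hkl, hpl⟩

lemma exists_exchange_positions (hcard : #B = #C) (ht : 0 < t)
    (hk : northCount C k + t ≤ northCount B k) :
    ∃ i j, i ∈ B ∧ i ∉ C ∧ j ∈ C ∧ j ∉ B ∧ k ∈ Ioc i j ∧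
      ∀ l ∈ Ioc i j, northCount C l + t ≤ northCount B l := by
  obtain ⟨N, hN⟩ := exists_nat_subset_range (B ∪ C)
  have hrange {D : Finset ℕ} (hD : D ⊆ B ∪ C) : D ⊆ range (max k N) :=
    (hD.trans hN).trans (range_mono (le_max_right k N))
  obtain ⟨i, j, hkij, hi, hj, hmid⟩ :=
    exists_maximal_Ioc (p := fun l => northCount C l + t ≤ northCount B l) (N := max k N)
      (by simp only [northCount_zero]; omega) hk (le_max_left _ _)
      (by rw [northCount_eq_card (hrange subset_union_left),
            northCount_eq_card (hrange subset_union_right)]; omega)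
  have hij := mem_Ioc.1 hkij
  have hi' := hmid (i + 1) (mem_Ioc.2 (by omega))
  have hj' := hmid j (mem_Ioc.2 (by omega))
  rw [northCount_succ, northCount_succ] at hi' hj
  refine ⟨i, j, ?_, ?_, ?_, ?_, hkij, hmid⟩ <;> by_contra <;> split_ifs at hi' hj <;> grind

end NorthCount

section PathConvex

/-- An `r`-uniform family of sets of north steps that contains, with any two paths, every path
running between them. The counts are compared in the lattice `ℕ → ℕ`, so that the two given paths
are allowed to cross. -/
structure IsPathConvex (r : ℕ) (P : Finset ℕ → Prop) : Prop where
  card_eq {B : Finset ℕ} : P B → #B = r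
  of_mem_uIcc {B C D : Finset ℕ} : P B → P C →
    northCount D ∈ Set.uIcc (northCount B) (northCount C) → P D

variable {n r : ℕ} {α ω B : Finset ℕ}

lemma northCount_one_of_isLatticePath (hB : IsLatticePath n r B) : northCount B 1 = 0 := by
  rw [northCount_succ, northCount_zero, if_neg fun h => by simpa using mem_Icc.1 (hB.1 h)]

lemma northCount_of_isLatticePath (hB : IsLatticePath n r B) {k : ℕ} (hk : n + r < k) :
    northCount B k = r := by
  rw [← hB.2]
  exact northCount_eq_card fun x hx => mem_range.2 ((mem_Icc.1 (hB.1 hx)).2.trans_lt hk)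

-- Outside the ground set the counts of `ω` and `α` agree, so being squeezed between them already
-- forces `B` to be a lattice path.
lemma isLatticePath_of_northCount_mem_Icc (hα : IsLatticePath n r α) (hω : IsLatticePath n r ω)
    (hB : northCount B ∈ Set.Icc (northCount ω) (northCount α)) : IsLatticePath n r B := by
  have hone : northCount B 1 = 0 :=
    Nat.le_zero.1 ((hB.2 1).trans_eq (northCount_one_of_isLatticePath hα))
  have htop {k : ℕ} (hk : n + r < k) : northCount B k = r :=
    le_antisymm ((hB.2 k).trans_eq (northCount_of_isLatticePath hα hk))
      ((northCount_of_isLatticePath hω hk).ge.trans (hB.1 k))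
  have hsub : B ⊆ Icc 1 (n + r) := by
    intro x hx
    have hjump : northCount B (x + 1) = northCount B x + 1 := by rw [northCount_succ, if_pos hx]
    refine mem_Icc.2 ⟨Nat.one_le_iff_ne_zero.2 ?_, ?_⟩
    · rintro rfl
      rw [zero_add, hone] at hjump
      omega
    · by_contra! hlt
      rw [htop hlt, htop (hlt.trans x.lt_succ_self)] at hjump
      omega
  refine ⟨hsub, ?_⟩
  rw [← northCount_eq_card fun x hx => mem_range.2 (Nat.lt_succ_of_le (mem_Icc.1 (hsub hx)).2)]
  exact htop (Nat.lt_succ_self _)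

lemma isLPMBasis_iff_northCount_mem_Icc (hα : IsLatticePath n r α) (hω : IsLatticePath n r ω) :
    IsLPMBasis n r α ω B ↔ northCount B ∈ Set.Icc (northCount ω) (northCount α) := by
  have hiff (hB : IsLatticePath n r B) : PathAbove α B ∧ PathAbove B ω ↔
      northCount B ∈ Set.Icc (northCount ω) (northCount α) := by
    rw [pathAbove_iff_northCount_le (hα.2.trans hB.2.symm),
      pathAbove_iff_northCount_le (hB.2.trans hω.2.symm), and_comm, Set.mem_Icc]
  refine ⟨fun hB => (hiff hB.1).1 hB.2, fun hB => ?_⟩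
  have hpath := isLatticePath_of_northCount_mem_Icc hα hω hB
  exact ⟨hpath, (hiff hpath).2 hB⟩

lemma isPathConvex_isLPMBasis (hα : IsLatticePath n r α) (hω : IsLatticePath n r ω) :
    IsPathConvex r (IsLPMBasis n r α ω) where
  card_eq hB := hB.1.2
  of_mem_uIcc hB hC hD := by
    rw [isLPMBasis_iff_northCount_mem_Icc hα hω] at hB hC ⊢
    exact Set.uIcc_subset_Icc hB hC hD

end PathConvex

section ToricMap

lemma ker_le_of_basis_sub_mem {R V W ι κ : Type*} [Ring R] [AddCommGroup V] [AddCommGroup W]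
    [Module R V] [Module R W] (b : Module.Basis ι R V) (c : Module.Basis κ R W) (φ : V →ₗ[R] W)
    (e : ι → κ) (hφ : ∀ i, φ (b i) = c (e i)) (S : Submodule R V)
    (hS : ∀ i j, e i = e j → b i - b j ∈ S) : LinearMap.ker φ ≤ S := by
  have hfactor : (S.mkQ ∘ b).FactorsThrough e := fun i j h =>
    (Submodule.Quotient.eq S).2 (hS i j h)
  let χ : W →ₗ[R] V ⧸ S := c.constr ℕ (Function.extend e (S.mkQ ∘ b) 0)
  have hχφ : χ ∘ₗ φ = S.mkQ := b.ext fun i => by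
    rw [LinearMap.comp_apply, hφ, c.constr_basis, hfactor.extend_apply, Function.comp_apply]
  intro v hv
  rw [← S.ker_mkQ, LinearMap.mem_ker, ← hχφ, LinearMap.comp_apply, LinearMap.mem_ker.1 hv, map_zero]

/-- The monomial basis of a polynomial ring, indexed by multisets of variables. -/
noncomputable def multisetMonomialBasis (R σ : Type*) [CommSemiring R] [DecidableEq σ] :
    Module.Basis (Multiset σ) R (MvPolynomial σ R) :=
  (basisMonomials σ R).reindex Multiset.toFinsupp.symm.toEquiv

lemma multisetMonomialBasis_apply {R σ : Type*} [CommSemiring R] [DecidableEq σ]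
    (M : Multiset σ) :
    multisetMonomialBasis R σ M = (M.map X).prod := by
  obtain ⟨u, rfl⟩ := Multiset.toFinsupp.symm.surjective M
  simp [multisetMonomialBasis, monomial_eq, Finsupp.toMultiset_map, Finsupp.prod_toMultiset,
    Finsupp.prod_mapDomain_index, pow_add]

variable {P : Finset ℕ → Prop}

/-- The multiset union of a multiset of bases: the exponent of the image of the corresponding
monomial under the toric map. -/
def multiUnion (M : Multiset {B : Finset ℕ // P B}) : Multiset ℕ := M.bind fun B => B.1.val

lemma multiUnion_cons (B : {B : Finset ℕ // P B}) (M : Multiset {B : Finset ℕ // P B}) :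
    multiUnion (B ::ₘ M) = B.1.val + multiUnion M := Multiset.cons_bind _ _ _

lemma card_multiUnion {r : ℕ} (hP : ∀ B, P B → #B = r)
    (M : Multiset {B : Finset ℕ // P B}) :
    (multiUnion M).card = M.card * r := by
  rw [multiUnion, Multiset.card_bind, Multiset.map_congr rfl fun B _ => hP B.1 B.2,
    Multiset.map_const', Multiset.sum_replicate, smul_eq_mul]

lemma sum_northCount_eq (M : Multiset {B : Finset ℕ // P B}) (k : ℕ) :
    (M.map fun B => northCount B.1 k).sum =
      ((multiUnion M).map fun x => if x < k then 1 else 0).sum := by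
  simp only [multiUnion, Multiset.map_bind, Multiset.sum_bind, northCount_eq_sum]
  rfl

lemma toricMapM_multisetMonomialBasis (M : Multiset {B : Finset ℕ // P B}) :
    toricMapM P (multisetMonomialBasis ℂ _ M) = multisetMonomialBasis ℂ ℕ (multiUnion M) := by
  rw [multisetMonomialBasis_apply, multisetMonomialBasis_apply, multiUnion, Multiset.map_bind,
    Multiset.prod_bind, map_multiset_prod, Multiset.map_map]
  simp [toricMapM]

lemma span_SEBM_le_ker (P : Finset ℕ → Prop) :
    Ideal.span (SEBM P) ≤ RingHom.ker (toricMapM P) := by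
  rw [Ideal.span_le]
  rintro _ ⟨B, B', C, C', ⟨-, -, i, j, hiB, hiB', hjB', hjB, hC, hC', -, -⟩, rfl⟩
  rw [SetLike.mem_coe, RingHom.sub_mem_ker_iff]
  simp only [toricMapM, map_mul, aeval_X]
  rw [hC, hC', prod_insert (fun h => hjB (mem_of_mem_erase h)),
    prod_insert (fun h => hiB' (mem_of_mem_erase h)), ← mul_prod_erase _ _ hiB,
    ← mul_prod_erase _ _ hjB']
  ring

end ToricMap

section ExchangeClass

variable {P : Finset ℕ → Prop}

/-- The residue class of the monomial `∏_{B ∈ M} Y_B` modulo the symmetric exchange binomials. -/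
noncomputable def exchangeClass (M : Multiset {B : Finset ℕ // P B}) :
    MvPolynomial {B : Finset ℕ // P B} ℂ ⧸ Ideal.span (SEBM P) :=
  Ideal.Quotient.mk _ (multisetMonomialBasis ℂ _ M)

lemma exchangeClass_cons (B : {B : Finset ℕ // P B}) (M : Multiset {B : Finset ℕ // P B}) :
    exchangeClass (B ::ₘ M) = Ideal.Quotient.mk _ (X B) * exchangeClass M := by
  simp only [exchangeClass, multisetMonomialBasis_apply, Multiset.map_cons, Multiset.prod_cons,
    map_mul]

lemma multiUnion_eq_of_exchangeClass_eq {M M' : Multiset {B : Finset ℕ // P B}}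
    (h : exchangeClass M = exchangeClass M') : multiUnion M = multiUnion M' := by
  have hker := span_SEBM_le_ker P (Ideal.Quotient.eq.1 h)
  rw [RingHom.sub_mem_ker_iff, toricMapM_multisetMonomialBasis,
    toricMapM_multisetMonomialBasis] at hker
  exact (multisetMonomialBasis ℂ ℕ).injective hker

lemma exchangeClass_cons_cons_of_symExchM {B C B' C' : {B : Finset ℕ // P B}}
    (h : SymExchM P B.1 C.1 B'.1 C'.1) (s : Multiset {B : Finset ℕ // P B}) :
    exchangeClass (B ::ₘ C ::ₘ s) = exchangeClass (B' ::ₘ C' ::ₘ s) := by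
  have hmk : Ideal.Quotient.mk (Ideal.span (SEBM P)) (X B * X C) =
      Ideal.Quotient.mk _ (X B' * X C') :=
    Ideal.Quotient.eq.2 (Ideal.subset_span ⟨B, C, B', C', h, rfl⟩)
  rw [map_mul, map_mul] at hmk
  simp only [exchangeClass_cons, ← mul_assoc, hmk]

end ExchangeClass

section TopPath

variable {P : Finset ℕ → Prop} {r : ℕ}

lemma IsPathConvex.symExchM (hP : IsPathConvex r P) {B C : Finset ℕ} (hB : P B) (hC : P C)
    {i j : ℕ} (hiB : i ∈ B) (hiC : i ∉ C) (hjC : j ∈ C) (hjB : j ∉ B) (hij : i < j)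
    (hlt : ∀ l ∈ Ioc i j, northCount C l < northCount B l) :
    SymExchM P B C (insert j (B.erase i)) (insert i (C.erase j)) := by
  refine ⟨hB, hC, i, j, hiB, hiC, hjC, hjB, rfl, rfl, hP.of_mem_uIcc hB hC ?_,
    hP.of_mem_uIcc hB hC ?_⟩ <;>
  · refine ⟨fun l => ?_, fun l => ?_⟩ <;>
    · have hdelay := northCount_delay hiB hjB hij l
      have hadvance := northCount_advance hiC hjC hij l
      have := hlt l
      simp only [Pi.inf_apply, Pi.sup_apply]
      split_ifs at hdelay hadvance <;> grind

lemma IsPathConvex.exists_symExchM (hP : IsPathConvex r P) (B C : {B : Finset ℕ // P B})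
    {t k : ℕ} (ht : 0 < t) (hk : northCount C.1 k + t ≤ northCount B.1 k) :
    ∃ B' C' : {B : Finset ℕ // P B}, SymExchM P B.1 C.1 B'.1 C'.1 ∧ ∃ J : Finset ℕ, k ∈ J ∧
      (∀ l ∈ J, northCount C.1 l + t ≤ northCount B.1 l ∧
        northCount B'.1 l + 1 = northCount B.1 l ∧ northCount C'.1 l = northCount C.1 l + 1) ∧
      ∀ l ∉ J, northCount B'.1 l = northCount B.1 l ∧ northCount C'.1 l = northCount C.1 l := by
  obtain ⟨i, j, hiB, hiC, hjC, hjB, hkij, hgap⟩ :=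
    exists_exchange_positions ((hP.card_eq B.2).trans (hP.card_eq C.2).symm) ht hk
  have hij : i < j := (mem_Ioc.1 hkij).1.trans_le (mem_Ioc.1 hkij).2
  have hexch := hP.symExchM B.2 C.2 hiB hiC hjC hjB hij fun l hl =>
    (Nat.lt_add_of_pos_right ht).trans_le (hgap l hl)
  obtain ⟨-, -, -, -, -, -, -, -, -, -, hB', hC'⟩ := id hexch
  refine ⟨⟨_, hB'⟩, ⟨_, hC'⟩, hexch, Ioc i j, hkij, fun l hl => ⟨hgap l hl, ?_, ?_⟩,
    fun l hl => ⟨?_, ?_⟩⟩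
  · simpa only [if_pos hl] using northCount_delay hiB hjB hij l
  · simpa only [if_pos hl] using northCount_advance hiC hjC hij l
  · simpa only [if_neg hl, add_zero] using northCount_delay hiB hjB hij l
  · simpa only [if_neg hl, add_zero] using northCount_advance hiC hjC hij l

/-- `B` lies weakly above every member of `s`, and by at most one north step at each position. -/
def IsTopPath (B : {B : Finset ℕ // P B}) (s : Multiset {B : Finset ℕ // P B}) : Prop :=
  ∀ C ∈ s, ∀ k, northCount C.1 k ≤ northCount B.1 k ∧ northCount B.1 k ≤ northCount C.1 k + 1

-- The right-hand side is the rounded-up average of the counts of `B ::ₘ s`.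
lemma IsTopPath.northCount_eq {B : {B : Finset ℕ // P B}} {s : Multiset {B : Finset ℕ // P B}}
    (h : IsTopPath B s) (k : ℕ) :
    northCount B.1 k =
      (((multiUnion (B ::ₘ s)).map fun x => if x < k then 1 else 0).sum + s.card) /
        (s.card + 1) := by
  have hle : (s.map fun C => northCount C.1 k).sum ≤ s.card * northCount B.1 k := by
    simpa using Multiset.sum_map_le_sum_map _ (fun _ => northCount B.1 k) fun C hC => (h C hC k).1
  have hge : s.card * northCount B.1 k ≤ (s.map fun C => northCount C.1 k).sum + s.card := by
    simpa using Multiset.sum_map_le_sum_map (fun _ => northCount B.1 k) _ fun C hC => (h C hC k).2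
  rw [← sum_northCount_eq, Multiset.map_cons, Multiset.sum_cons]
  exact (Nat.div_eq_of_lt_le (by linarith) (by linarith)).symm

lemma IsTopPath.eq_of_multiUnion_eq {B B' : {B : Finset ℕ // P B}}
    {s s' : Multiset {B : Finset ℕ // P B}} (h : IsTopPath B s) (h' : IsTopPath B' s')
    (hcard : s.card = s'.card) (hunion : multiUnion (B ::ₘ s) = multiUnion (B' ::ₘ s')) :
    B = B' := by
  refine Subtype.ext (northCount_injective (funext fun k => ?_))
  rw [h.northCount_eq, h'.northCount_eq, hcard, hunion]

/-- The potential of a multiset `B ::ₘ s` of paths, with `B` distinguished, that decreases under the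
exchanges turning `B` into a top path. Weighting `s` by `c (c + 1)` instead of `c ^ 2` makes it
profitable to raise `B` as soon as `b < c`, but to lower it only if `b ≥ c + 2`. The bound `N` is
meant to exceed all north steps, so that only counts at positions `< N` can differ. -/
def energy (N : ℕ) (B : {B : Finset ℕ // P B}) (s : Multiset {B : Finset ℕ // P B}) : ℕ :=
  ∑ k ∈ range N, (northCount B.1 k ^ 2 +
    (s.map fun C => northCount C.1 k * (northCount C.1 k + 1)).sum)

lemma energy_cons_lt_energy_cons {N k : ℕ} {B C B' C' : {B : Finset ℕ // P B}}
    (s : Multiset {B : Finset ℕ // P B}) {J : Finset ℕ} (hkN : k < N) (hkJ : k ∈ J)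
    (hJ : ∀ l ∈ J, northCount B'.1 l ^ 2 + northCount C'.1 l * (northCount C'.1 l + 1) <
      northCount B.1 l ^ 2 + northCount C.1 l * (northCount C.1 l + 1))
    (hJc : ∀ l ∉ J, northCount B'.1 l = northCount B.1 l ∧ northCount C'.1 l = northCount C.1 l) :
    energy N B' (C' ::ₘ s) < energy N B (C ::ₘ s) := by
  simp only [energy, Multiset.map_cons, Multiset.sum_cons, ← add_assoc]
  refine sum_lt_sum (fun l _ => ?_) ⟨k, mem_range.2 hkN, Nat.add_lt_add_right (hJ k hkJ) _⟩
  by_cases hl : l ∈ J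
  · exact Nat.add_le_add_right (hJ l hl).le _
  · rw [(hJc l hl).1, (hJc l hl).2]

lemma IsPathConvex.exists_energy_lt (hP : IsPathConvex r P) {N : ℕ} {B : {B : Finset ℕ // P B}}
    {s : Multiset {B : Finset ℕ // P B}} (hN : ∀ x ∈ multiUnion (B ::ₘ s), x < N)
    (htop : ¬IsTopPath B s) :
    ∃ B' s', s'.card = s.card ∧ exchangeClass (B ::ₘ s) = exchangeClass (B' ::ₘ s') ∧
      energy N B' s' < energy N B s := by
  simp only [IsTopPath, not_forall] at htop
  obtain ⟨C, hCs, k, hk⟩ := htop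
  obtain ⟨s, rfl⟩ := Multiset.exists_cons_of_mem hCs
  simp only [multiUnion_cons, Multiset.mem_add, mem_val] at hN
  have hkN : k < N := lt_of_northCount_ne (B := B.1) (C := C.1)
    (fun x hx => mem_range.2 (hN x (.inl hx))) (fun x hx => mem_range.2 (hN x (.inr (.inl hx))))
    ((hP.card_eq B.2).trans (hP.card_eq C.2).symm) (by omega)
  obtain hBC | hCB : northCount C.1 k + 2 ≤ northCount B.1 k ∨
      northCount B.1 k + 1 ≤ northCount C.1 k := by omega
  · obtain ⟨B', C', hexch, J, hkJ, hJ, hJc⟩ := hP.exists_symExchM B C two_pos hBC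
    refine ⟨B', C' ::ₘ s, by simp, exchangeClass_cons_cons_of_symExchM hexch s,
      energy_cons_lt_energy_cons s hkN hkJ (fun l hl => ?_) hJc⟩
    obtain ⟨hgap, hB', hC'⟩ := hJ l hl
    rw [hC', ← hB']
    nlinarith
  · obtain ⟨C', B', hexch, J, hkJ, hJ, hJc⟩ := hP.exists_symExchM C B one_pos hCB
    refine ⟨B', C' ::ₘ s, by simp, ?_,
      energy_cons_lt_energy_cons s hkN hkJ (fun l hl => ?_) fun l hl => (hJc l hl).symm⟩
    · rw [Multiset.cons_swap B, Multiset.cons_swap B']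
      exact exchangeClass_cons_cons_of_symExchM hexch s
    · obtain ⟨hgap, hC', hB'⟩ := hJ l hl
      rw [hB', ← hC']
      nlinarith

lemma IsPathConvex.exists_isTopPath (hP : IsPathConvex r P) (B : {B : Finset ℕ // P B})
    (s : Multiset {B : Finset ℕ // P B}) :
    ∃ B' s', s'.card = s.card ∧ exchangeClass (B ::ₘ s) = exchangeClass (B' ::ₘ s') ∧
      IsTopPath B' s' := by
  obtain ⟨N, hN⟩ := exists_nat_subset_range (multiUnion (B ::ₘ s)).toFinset
  replace hN : ∀ x ∈ multiUnion (B ::ₘ s), x < N := fun x hx =>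
    mem_range.1 (hN (Multiset.mem_toFinset.2 hx))
  induction hd : energy N B s using Nat.strong_induction_on generalizing B s with
  | _ d ih =>
    by_cases htop : IsTopPath B s
    · exact ⟨B, s, rfl, rfl, htop⟩
    obtain ⟨B₁, s₁, hcard₁, hclass₁, hlt⟩ := hP.exists_energy_lt hN htop
    rw [multiUnion_eq_of_exchangeClass_eq hclass₁] at hN
    obtain ⟨B₂, s₂, hcard₂, hclass₂, htop₂⟩ := ih _ (hd ▸ hlt) B₁ s₁ hN rfl
    exact ⟨B₂, s₂, hcard₂.trans hcard₁, hclass₁.trans hclass₂, htop₂⟩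

lemma IsPathConvex.exchangeClass_eq_of_card_eq (hP : IsPathConvex r P) {d : ℕ}
    {M M' : Multiset {B : Finset ℕ // P B}} (hM : M.card = d) (hM' : M'.card = d)
    (hunion : multiUnion M = multiUnion M') : exchangeClass M = exchangeClass M' := by
  induction d generalizing M M' with
  | zero => rw [Multiset.card_eq_zero.1 hM, Multiset.card_eq_zero.1 hM']
  | succ d ih =>
    obtain ⟨B, s, rfl, hs⟩ := Multiset.card_eq_succ_iff.1 hM
    obtain ⟨B', s', rfl, hs'⟩ := Multiset.card_eq_succ_iff.1 hM'
    obtain ⟨T, u, hu, hclass, htop⟩ := hP.exists_isTopPath B s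
    obtain ⟨T', u', hu', hclass', htop'⟩ := hP.exists_isTopPath B' s'
    rw [multiUnion_eq_of_exchangeClass_eq hclass, multiUnion_eq_of_exchangeClass_eq hclass']
      at hunion
    obtain rfl : T = T' := htop.eq_of_multiUnion_eq htop' (by omega) hunion
    rw [multiUnion_cons, multiUnion_cons, add_right_inj] at hunion
    rw [hclass, hclass', exchangeClass_cons, exchangeClass_cons,
      ih (hu.trans hs) (hu'.trans hs') hunion]

lemma IsPathConvex.exchangeClass_eq_of_multiUnion_eq (hP : IsPathConvex r P) (hr : 0 < r)
    {M M' : Multiset {B : Finset ℕ // P B}} (hunion : multiUnion M = multiUnion M') :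
    exchangeClass M = exchangeClass M' := by
  have hcard : M.card * r = M'.card * r := by
    rw [← card_multiUnion fun _ => hP.card_eq, ← card_multiUnion fun _ => hP.card_eq, hunion]
  exact hP.exchangeClass_eq_of_card_eq rfl (Nat.eq_of_mul_eq_mul_right hr hcard).symm hunion

end TopPath

theorem stmt8_general {r : ℕ} (hr : 0 < r) {P : Finset ℕ → Prop} (hP : IsPathConvex r P) :
    RingHom.ker (toricMapM P) = Ideal.span (SEBM P) :=
  le_antisymm
    (ker_le_of_basis_sub_mem (multisetMonomialBasis ℂ _) (multisetMonomialBasis ℂ ℕ)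
      (toricMapM P).toLinearMap multiUnion toricMapM_multisetMonomialBasis
      ((Ideal.span (SEBM P)).restrictScalars ℂ)
      fun _ _ h => Ideal.Quotient.eq.1 (hP.exchangeClass_eq_of_multiUnion_eq hr h))
    (span_SEBM_le_ker P)

/-- The toric ideal of a lattice path matroid is generated by its symmetric
exchange binomials. -/
theorem stmt8 (n r : ℕ) (hn : 0 < n) (hr : 0 < r) (α ω : Finset ℕ)
    (hα : IsLatticePath n r α) (hω : IsLatticePath n r ω) (hαω : PathAbove α ω) :
    RingHom.ker (toricMapM (IsLPMBasis n r α ω)) =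
      Ideal.span (SEBM (IsLPMBasis n r α ω)) :=
  stmt8_general hr (isPathConvex_isLPMBasis hα hω)
end

section
/- Let α ⪰ ω be lattice paths from (0,0) to (n,r) and let M(α,ω) be the associated lattice path matroid. Then there exists a monomial order ≻ on the monomials of the base ring of M(α,ω) under which the symmetric exchange binomials form a Gröbner basis of the toric ideal: for every nonzero f in ker φ, the ≻-leading monomial of f is divisible by the ≻-leading monomial of some symmetric exchange binomial. -/
/-- A monomial order on the monomials (exponent vectors) of a polynomial ring:
a total order with `M ≻ 1` for `M ≠ 1`, compatible with multiplication. -/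
def IsMonomialOrder {X : Type*} (succ : (X →₀ ℕ) → (X →₀ ℕ) → Prop) : Prop :=
  (∀ M M', M = M' ∨ succ M M' ∨ succ M' M) ∧
  (∀ M, ¬ succ M M) ∧
  (∀ M M' M'', succ M M' → succ M' M'' → succ M M'') ∧
  (∀ M, M ≠ 0 → succ M 0) ∧
  (∀ M M' N, succ M M' → succ (M + N) (M' + N))

/-- `d` is the `succ`-leading monomial of `f`. -/
def IsLeadMonOf {X : Type*} (succ : (X →₀ ℕ) → (X →₀ ℕ) → Prop)
    (f : MvPolynomial X ℂ) (d : X →₀ ℕ) : Prop :=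
  d ∈ f.support ∧ ∀ d' ∈ f.support, d' ≠ d → succ d d'

/-! Record a path `B` by its height function `k ↦ #{x ∈ B | x < k}`. A set is a basis iff its height
function lies between those of `ω` and `α`, and where the height of `B` exceeds that of `B'`, a
symmetric exchange at the two ends of a maximal interval of excess moves one unit of height from `B`
to `B'` along the whole interval.

Order monomials first by the energy `∑ k, (height B k) ^ 2`, then by the product of the areas below
and above the path. A transfer of height from `B` to `B'` never raises the energy, and lowers it if
the two paths are ever more than one apart. If the energy stays constant and `B` has at most the
area of `B'`, the areas move further apart, so the second weight, which is strictly concave in the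
area, drops. Hence a monomial divisible by no leading monomial of an exchange binomial is a chain of
paths that are pairwise at most one apart. The top path of such a chain is the rounded-up average
of the heights, so peeling off top paths shows that the chain is determined by its image under the
toric map. A leading monomial of an element of the toric ideal is never minimal in its fibre, and
hence is divisible by the leading monomial of an exchange binomial. -/

open scoped MonomialOrder

namespace LatticePathMatroid

section MonomialOrders

universe u v

variable {σ : Type u}

theorem exists_monomialOrder (σ : Type u) : Nonempty (MonomialOrder.{u, u} σ) := by
  obtain ⟨_, _⟩ := exists_wellFoundedGT σ
  exact ⟨MonomialOrder.lex⟩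

/-- The homomorphism sending a monomial to its weight followed by its value under `m`. -/
noncomputable def weightThenSyn (w : σ → ℕ) (m : MonomialOrder.{u, v} σ) :
    (σ →₀ ℕ) →+ ℕ ×ₗ m.syn where
  toFun M := toLex (Finsupp.weight w M, m.toSyn M)
  map_zero' := by simp only [map_zero]; rfl
  map_add' M M' := by simp only [map_add]; rfl

/-- The monomial order that compares weights first and breaks ties by `m`, realized on the image
of the monomials in the lexicographic product `ℕ ×ₗ m.syn`. -/
noncomputable def weightRefinement (w : σ → ℕ) (m : MonomialOrder.{u, v} σ) :
    MonomialOrder.{u, v} σ where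
  syn := AddMonoidHom.mrange (weightThenSyn w m)
  toSyn := AddEquiv.ofLeftInverse' (weightThenSyn w m) (g := fun z => m.toSyn.symm (ofLex z).2)
    fun M => m.toSyn.symm_apply_apply M
  toSyn_monotone M M' h := by
    obtain ⟨N, rfl⟩ := exists_add_of_le h
    refine Prod.Lex.toLex_mono ⟨?_, m.toSyn_monotone h⟩
    simp only [map_add]
    exact Nat.le_add_right _ _

theorem weightRefinement_lt_iff {w : σ → ℕ} {m : MonomialOrder σ} {M M' : σ →₀ ℕ} :
    M ≺[weightRefinement w m] M' ↔ Finsupp.weight w M < Finsupp.weight w M' ∨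
      Finsupp.weight w M = Finsupp.weight w M' ∧ M ≺[m] M' :=
  Prod.Lex.toLex_lt_toLex

theorem isMonomialOrder_lt (m : MonomialOrder σ) :
    IsMonomialOrder fun M M' : σ →₀ ℕ => M' ≺[m] M := by
  refine ⟨fun M M' => ?_, fun M => lt_irrefl _, fun _ _ _ h h' => h'.trans h,
    fun M hM => ?_, fun _ _ _ h => ?_⟩
  · rcases lt_trichotomy (m.toSyn M) (m.toSyn M') with h | h | h
    · exact .inr (.inr h)
    · exact .inl (m.toSyn.injective h)
    · exact .inr (.inl h)
  · simpa [m.toSyn_lt_iff_ne_zero] using hM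
  · simpa using h

theorem isLeadMonOf_degree (m : MonomialOrder σ) {f : MvPolynomial σ ℂ} (hf : f ≠ 0) :
    IsLeadMonOf (fun M M' => M' ≺[m] M) f (m.degree f) :=
  ⟨m.degree_mem_support hf, fun _ hd hne =>
    (m.le_degree hd).lt_of_ne (m.toSyn.injective.ne hne)⟩

theorem isLeadMonOf_X_mul_X_sub {m : MonomialOrder σ} {a b c d : σ}
    (h : Finsupp.single c 1 + Finsupp.single d 1 ≺[m] Finsupp.single a 1 + Finsupp.single b 1) :
    IsLeadMonOf (fun M M' => M' ≺[m] M)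
      (MvPolynomial.X a * MvPolynomial.X b - MvPolynomial.X c * MvPolynomial.X d)
      (Finsupp.single a 1 + Finsupp.single b 1) := by
  have degree_X_mul_X (x y : σ) : m.degree (MvPolynomial.X x * MvPolynomial.X y :
      MvPolynomial σ ℂ) = Finsupp.single x 1 + Finsupp.single y 1 := by
    rw [m.degree_mul (MvPolynomial.X_ne_zero x) (MvPolynomial.X_ne_zero y), m.degree_X, m.degree_X]
  rw [← degree_X_mul_X, ← degree_X_mul_X] at h
  have hdeg := m.degree_sub_of_lt h
  rw [← degree_X_mul_X, ← hdeg]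
  refine isLeadMonOf_degree m fun hzero => h.ne' ?_
  rw [sub_eq_zero.mp hzero]

theorem single_add_single_le {M : σ →₀ ℕ} {x y : σ} (hxy : x ≠ y) (hx : x ∈ M.support)
    (hy : y ∈ M.support) : Finsupp.single x 1 + Finsupp.single y 1 ≤ M := by
  classical
  intro z
  rw [Finsupp.mem_support_iff] at hx hy
  simp only [Finsupp.add_apply, Finsupp.single_apply]
  grind

end MonomialOrders

section Toric

theorem exists_ne_mem_support_of_map_eq_zero {σ τ R F : Type*} [CommSemiring R]
    [FunLike F (MvPolynomial σ R) (MvPolynomial τ R)]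
    [AddMonoidHomClass F (MvPolynomial σ R) (MvPolynomial τ R)] {φ : F}
    {E : (σ →₀ ℕ) → (τ →₀ ℕ)}
    (hφ : ∀ d c, φ (MvPolynomial.monomial d c) = MvPolynomial.monomial (E d) c)
    {f : MvPolynomial σ R} (hf : φ f = 0) {d : σ →₀ ℕ} (hd : d ∈ f.support) :
    ∃ d' ∈ f.support, d' ≠ d ∧ E d' = E d := by
  classical
  by_contra! hcon
  refine MvPolynomial.mem_support_iff.mp hd ?_
  calc f.coeff d
      = ∑ e ∈ f.support, (MvPolynomial.monomial (E e) (f.coeff e)).coeff (E d) := by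
        rw [Finset.sum_eq_single_of_mem d hd fun e he hne => ?_, MvPolynomial.coeff_monomial,
          if_pos rfl]
        rw [MvPolynomial.coeff_monomial, if_neg (hcon e he hne)]
    _ = (φ f).coeff (E d) := by
        conv_rhs => rw [f.as_sum, map_sum]
        simp only [hφ, MvPolynomial.coeff_sum]
    _ = 0 := by rw [hf, MvPolynomial.coeff_zero]

theorem map_weight {σ A B : Type*} [AddCommMonoid A] [AddCommMonoid B] (φ : A →+ B) (v : σ → A)
    (M : σ →₀ ℕ) : φ (Finsupp.weight v M) = Finsupp.weight (fun x => φ (v x)) M := by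
  simp only [Finsupp.weight_apply, map_finsuppSum, map_nsmul]

variable {P : Finset ℕ → Prop}

/-- The exponent vector of the image of a monomial under the toric map. -/
noncomputable def toricExponent (P : Finset ℕ → Prop) :
    ({B : Finset ℕ // P B} →₀ ℕ) →+ (ℕ →₀ ℕ) :=
  Finsupp.weight fun B => ∑ i ∈ B.1, Finsupp.single i 1

theorem toricMapM_monomial (M : {B : Finset ℕ // P B} →₀ ℕ) (c : ℂ) :
    toricMapM P (MvPolynomial.monomial M c) = MvPolynomial.monomial (toricExponent P M) c := by
  have prod_X (B : Finset ℕ) : ∏ i ∈ B, (MvPolynomial.X i : MvPolynomial ℕ ℂ) =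
      MvPolynomial.monomial (∑ i ∈ B, Finsupp.single i 1) 1 :=
    (MvPolynomial.monomial_sum_one B _).symm
  simp only [toricMapM, MvPolynomial.aeval_monomial, prod_X, MvPolynomial.monomial_pow, one_pow,
    Finsupp.prod, ← MvPolynomial.monomial_sum_one, MvPolynomial.algebraMap_eq,
    MvPolynomial.C_mul_monomial, mul_one]
  rfl

theorem toricExponent_eq_of_symExchM {B B' C C' : {B : Finset ℕ // P B}}
    (h : SymExchM P B.1 B'.1 C.1 C'.1) :
    toricExponent P (Finsupp.single C 1 + Finsupp.single C' 1) =
      toricExponent P (Finsupp.single B 1 + Finsupp.single B' 1) := by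
  obtain ⟨-, -, i, j, hi, hi', hj, hj', hC, hC', -, -⟩ := h
  simp only [map_add, toricExponent, Finsupp.weight_single, one_smul]
  rw [hC, hC', Finset.sum_insert (by simp [hj']), Finset.sum_insert (by simp [hi']),
    ← Finset.sum_erase_add B.1 _ hi, ← Finset.sum_erase_add B'.1 _ hj]
  abel

/-- Monomials divisible by no `m`-leading monomial of a symmetric exchange binomial. -/
def IsStandard (m : MonomialOrder {B : Finset ℕ // P B}) (M : {B : Finset ℕ // P B} →₀ ℕ) :
    Prop :=
  ∀ ⦃B B' C C' : {B : Finset ℕ // P B}⦄, SymExchM P B.1 B'.1 C.1 C'.1 →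
    Finsupp.single C 1 + Finsupp.single C' 1 ≺[m] Finsupp.single B 1 + Finsupp.single B' 1 →
    ¬ Finsupp.single B 1 + Finsupp.single B' 1 ≤ M

variable {m : MonomialOrder {B : Finset ℕ // P B}}

theorem exists_isStandard_forall_le (M : {B : Finset ℕ // P B} →₀ ℕ) :
    ∃ Q, IsStandard m Q ∧ toricExponent P Q = toricExponent P M ∧
      ∀ N, toricExponent P N = toricExponent P M → Q ≼[m] N := by
  obtain ⟨Q, hQ, hmin⟩ := (InvImage.wf m.toSyn wellFounded_lt).has_min
    {Q | toricExponent P Q = toricExponent P M} ⟨M, rfl⟩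
  refine ⟨Q, fun B B' C C' hexch hlt hle => ?_, hQ, fun N hN => not_lt.mp (hmin N hN)⟩
  obtain ⟨N, rfl⟩ := exists_add_of_le hle
  refine hmin (Finsupp.single C 1 + Finsupp.single C' 1 + N) ?_ ?_
  · rw [Set.mem_ofPred_eq, map_add, toricExponent_eq_of_symExchM hexch, ← map_add]
    exact hQ
  · simpa [InvImage] using hlt

theorem exists_leadMon_le_of_injOn_isStandard
    (hinj : Set.InjOn (toricExponent P) {M | IsStandard m M})
    {f : MvPolynomial {B : Finset ℕ // P B} ℂ} (hf : toricMapM P f = 0) (hf0 : f ≠ 0) :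
    ∃ g ∈ SEBM P, ∃ e, IsLeadMonOf (fun M M' => M' ≺[m] M) g e ∧ e ≤ m.degree f := by
  have not_standard : ¬ IsStandard m (m.degree f) := by
    intro hstd
    obtain ⟨d, hd, hne, hexp⟩ :=
      exists_ne_mem_support_of_map_eq_zero toricMapM_monomial hf (m.degree_mem_support hf0)
    obtain ⟨Q, hQstd, hQ, hmin⟩ := exists_isStandard_forall_le (m := m) (m.degree f)
    have hQdeg : Q = m.degree f := hinj hQstd hstd hQ
    exact hne (m.toSyn.injective ((m.le_degree hd).antisymm (hQdeg ▸ hmin d hexp)))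
  simp only [IsStandard, not_forall, not_not] at not_standard
  obtain ⟨B, B', C, C', hexch, hlt, hle⟩ := not_standard
  exact ⟨_, ⟨B, B', C, C', hexch, rfl⟩, _, isLeadMonOf_X_mul_X_sub hlt, hle⟩

end Toric

section Balanced

variable {σ ι : Type*} {h : σ → ι → ℕ} {M M' : σ →₀ ℕ}

/-- A monomial in variables carrying height functions `h` is balanced if the height functions of
its variables form a chain and are pairwise at most one apart. -/
def IsBalanced (h : σ → ι → ℕ) (M : σ →₀ ℕ) : Prop :=
  ∀ x ∈ M.support, ∀ y ∈ M.support, (h x ≤ h y ∨ h y ≤ h x) ∧ h x ≤ h y + 1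

theorem IsBalanced.mono (hM : IsBalanced h M) (hle : M' ≤ M) : IsBalanced h M' :=
  fun x hx y hy => hM x (Finsupp.support_mono hle hx) y (Finsupp.support_mono hle hy)

theorem IsBalanced.exists_top (hM : IsBalanced h M) (hM0 : M ≠ 0) :
    ∃ x ∈ M.support, ∀ y ∈ M.support, h y ≤ h x := by
  obtain ⟨x, hx, hmax⟩ := M.support.exists_maximalFor h (Finsupp.support_nonempty_iff.mpr hM0)
  exact ⟨x, hx, fun y hy => (hM y hy x hx).1.elim id fun hxy => hmax hy hxy⟩

theorem IsBalanced.top_eq_ceilDiv (hM : IsBalanced h M) {x : σ} (hx : x ∈ M.support)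
    (htop : ∀ y ∈ M.support, h y ≤ h x) (k : ι) :
    h x k = Finsupp.weight h M k ⌈/⌉ M.degree := by
  have hweight : Finsupp.weight h M k = ∑ y ∈ M.support, M y * h y k := by
    simp [Finsupp.weight_apply, Finsupp.sum]
  have hupper : Finsupp.weight h M k ≤ M.degree * h x k := by
    rw [hweight, Finsupp.degree_apply, Finset.sum_mul]
    exact Finset.sum_le_sum fun y hy => Nat.mul_le_mul_left _ (htop y hy k)
  have hlower : M.degree * h x k < Finsupp.weight h M k + M.degree := by
    rw [hweight, Finsupp.degree_apply, Finset.sum_mul, ← Finset.sum_add_distrib]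
    refine Finset.sum_lt_sum (fun y hy => ?_) ⟨x, hx, ?_⟩
    · exact Nat.mul_le_mul_left (M y) ((hM x hx y hy).2 k)
    · exact Nat.lt_add_of_pos_right (Nat.pos_of_ne_zero (Finsupp.mem_support_iff.mp hx))
  rw [Nat.ceilDiv_eq_add_pred_div, eq_comm, Nat.div_eq_iff]
  · rw [mul_comm] at hupper hlower
    omega
  · omega

theorem IsBalanced.eq_of_weight_eq (hinj : Function.Injective h) (hM : IsBalanced h M)
    (hM' : IsBalanced h M') (hdeg : M.degree = M'.degree)
    (hweight : Finsupp.weight h M = Finsupp.weight h M') : M = M' := by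
  induction hD : M.degree generalizing M M' with
  | zero =>
    rw [(Finsupp.degree_eq_zero_iff M).mp hD, (Finsupp.degree_eq_zero_iff M').mp (hdeg ▸ hD)]
  | succ D ih =>
    have hM0 : M ≠ 0 := by rintro rfl; simp at hD
    have hM0' : M' ≠ 0 := by rintro rfl; simp [hdeg] at hD
    obtain ⟨x, hx, hxtop⟩ := hM.exists_top hM0
    obtain ⟨x', hx', hxtop'⟩ := hM'.exists_top hM0'
    obtain rfl : x = x' := hinj <| funext fun k => by
      rw [hM.top_eq_ceilDiv hx hxtop, hM'.top_eq_ceilDiv hx' hxtop', hweight, hdeg]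
    rw [Finsupp.mem_support_iff] at hx hx'
    have hpeel := Finsupp.sub_add_single_one_cancel hx
    have hpeel' := Finsupp.sub_add_single_one_cancel hx'
    rw [← hpeel, ← hpeel', map_add, map_add, add_left_inj] at hdeg hweight
    rw [← hpeel, map_add, Finsupp.degree_single, Nat.add_right_cancel_iff] at hD
    rw [← hpeel, ← hpeel',
      ih (hM.mono tsub_le_self) (hM'.mono tsub_le_self) hdeg hweight hD]

theorem exists_excess_of_not_isBalanced (s : Finset ι) (hM : ¬ IsBalanced h M) :
    ∃ x ∈ M.support, ∃ y ∈ M.support, ∃ k, h y k < h x k ∧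
      (h y k + 1 < h x k ∨ ∑ l ∈ s, h x l ≤ ∑ l ∈ s, h y l) := by
  simp only [IsBalanced, not_forall, not_and_or, not_or] at hM
  obtain ⟨x, hx, y, hy, ⟨hxy, hyx⟩ | hgap⟩ := hM
  · rw [Pi.le_def, not_forall] at hxy hyx
    obtain ⟨k, hk⟩ := hxy
    obtain ⟨l, hl⟩ := hyx
    rcases le_total (∑ l ∈ s, h x l) (∑ l ∈ s, h y l) with hsum | hsum
    · exact ⟨x, hx, y, hy, k, not_le.mp hk, .inr hsum⟩
    · exact ⟨y, hy, x, hx, l, not_le.mp hl, .inr hsum⟩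
  · rw [Pi.le_def, not_forall] at hgap
    obtain ⟨k, hk⟩ := hgap
    have hk : h y k + 1 < h x k := not_le.mp hk
    exact ⟨x, hx, y, hy, k, by omega, .inl hk⟩

end Balanced

section UnitTransfer

variable {ι : Type*} {f f' g g' : ι → ℕ} {s : Finset ι} {k : ι} {r : ℕ}

/-- `(g, g')` arises from `(f, f')` by moving one unit from `f` to `f'` at some of the points where
`f'` is below `f`. -/
def UnitTransfer (f f' g g' : ι → ℕ) : Prop :=
  ∀ k, (g k = f k ∧ g' k = f' k) ∨ (f' k < f k ∧ g k + 1 = f k ∧ g' k = f' k + 1)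

/-- The sum of squares of a height function over `s`. -/
def energy (s : Finset ι) (f : ι → ℕ) : ℕ := ∑ k ∈ s, f k ^ 2

/-- The area below a height function times the area between it and the constant `r`; the
subtraction is genuine for `f ≤ r`. -/
def areaProduct (r : ℕ) (s : Finset ι) (f : ι → ℕ) : ℕ := (∑ k ∈ s, f k) * ∑ k ∈ s, (r - f k)

namespace UnitTransfer

theorem mem_Icc (ht : UnitTransfer f f' g g') {a b : ι → ℕ} (hf : f ∈ Set.Icc a b)
    (hf' : f' ∈ Set.Icc a b) : g ∈ Set.Icc a b ∧ g' ∈ Set.Icc a b := by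
  have hbounds k : (a k ≤ g k ∧ g k ≤ b k) ∧ a k ≤ g' k ∧ g' k ≤ b k := by
    have hfk : a k ≤ f k ∧ f k ≤ b k := ⟨hf.1 k, hf.2 k⟩
    have hfk' : a k ≤ f' k ∧ f' k ≤ b k := ⟨hf'.1 k, hf'.2 k⟩
    have := ht k
    omega
  exact ⟨⟨fun k => (hbounds k).1.1, fun k => (hbounds k).1.2⟩,
    ⟨fun k => (hbounds k).2.1, fun k => (hbounds k).2.2⟩⟩

theorem sum_add_sum_eq (ht : UnitTransfer f f' g g') (s : Finset ι) :
    ∑ k ∈ s, g k + ∑ k ∈ s, g' k = ∑ k ∈ s, f k + ∑ k ∈ s, f' k := by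
  rw [← Finset.sum_add_distrib, ← Finset.sum_add_distrib]
  refine Finset.sum_congr rfl fun k _ => ?_
  have := ht k
  omega

theorem sum_lt_sum (ht : UnitTransfer f f' g g') (hk : k ∈ s) (hgk : g k < f k) :
    ∑ k ∈ s, g k < ∑ k ∈ s, f k := by
  refine Finset.sum_lt_sum (fun l _ => ?_) ⟨k, hk, hgk⟩
  have := ht l
  omega

theorem sq_add_sq_le (ht : UnitTransfer f f' g g') (k : ι) :
    g k ^ 2 + g' k ^ 2 ≤ f k ^ 2 + f' k ^ 2 := by
  rcases ht k with ⟨hg, hg'⟩ | ⟨hlt, hg, hg'⟩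
  · rw [hg, hg']
  · rw [← hg, hg']
    nlinarith

theorem energy_add_le (ht : UnitTransfer f f' g g') (s : Finset ι) :
    energy s g + energy s g' ≤ energy s f + energy s f' := by
  simp only [energy, ← Finset.sum_add_distrib]
  exact Finset.sum_le_sum fun k _ => ht.sq_add_sq_le k

theorem energy_add_lt (ht : UnitTransfer f f' g g') (hk : k ∈ s) (hgk : g k < f k)
    (hgap : f' k + 1 < f k) : energy s g + energy s g' < energy s f + energy s f' := by
  simp only [energy, ← Finset.sum_add_distrib]
  refine Finset.sum_lt_sum (fun l _ => ht.sq_add_sq_le l) ⟨k, hk, ?_⟩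
  obtain ⟨hg, -⟩ | ⟨-, hg, hg'⟩ := ht k
  · exact absurd hg hgk.ne
  · rw [hg', ← hg]
    nlinarith

theorem areaProduct_add_lt (ht : UnitTransfer f f' g g') (hk : k ∈ s) (hgk : g k < f k)
    (hf : ∀ k, f k ≤ r) (hf' : ∀ k, f' k ≤ r) (harea : ∑ k ∈ s, f k ≤ ∑ k ∈ s, f' k) :
    areaProduct r s g + areaProduct r s g' < areaProduct r s f + areaProduct r s f' := by
  have area_add_coarea {u : ι → ℕ} (hu : ∀ k, u k ≤ r) :
      ∑ k ∈ s, u k + ∑ k ∈ s, (r - u k) = s.card * r := by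
    rw [← Finset.sum_add_distrib, Finset.sum_congr rfl fun k _ => Nat.add_sub_of_le (hu k),
      Finset.sum_const, smul_eq_mul]
  obtain ⟨hg, hg'⟩ := ht.mem_Icc (a := 0) (b := fun _ => r) ⟨fun _ => Nat.zero_le _, hf⟩
    ⟨fun _ => Nat.zero_le _, hf'⟩
  have hfA := area_add_coarea hf
  have hfA' := area_add_coarea hf'
  have hgA := area_add_coarea hg.2
  have hgA' := area_add_coarea hg'.2
  have hsum := ht.sum_add_sum_eq s
  obtain ⟨m, hm⟩ := Nat.exists_eq_add_of_lt (ht.sum_lt_sum hk hgk)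
  unfold areaProduct
  have hg'area : ∑ k ∈ s, g' k = ∑ k ∈ s, f' k + (m + 1) := by omega
  have hgco : ∑ k ∈ s, (r - g k) = ∑ k ∈ s, (r - f k) + (m + 1) := by omega
  have hf'co : ∑ k ∈ s, (r - f' k) = ∑ k ∈ s, (r - g' k) + (m + 1) := by omega
  have hcross : ∑ k ∈ s, g k + ∑ k ∈ s, (r - g' k) <
      ∑ k ∈ s, (r - f k) + ∑ k ∈ s, f' k := by omega
  rw [hg'area, hgco, hf'co, hm]
  nlinarith [Nat.mul_lt_mul_of_pos_left hcross (Nat.succ_pos m)]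

theorem energy_areaProduct_lt (ht : UnitTransfer f f' g g') (hk : k ∈ s) (hgk : g k < f k)
    (hf : ∀ k, f k ≤ r) (hf' : ∀ k, f' k ≤ r)
    (hexcess : f' k + 1 < f k ∨ ∑ k ∈ s, f k ≤ ∑ k ∈ s, f' k) :
    energy s g + energy s g' < energy s f + energy s f' ∨
      energy s g + energy s g' = energy s f + energy s f' ∧
        areaProduct r s g + areaProduct r s g' < areaProduct r s f + areaProduct r s f' := by
  rcases hexcess with hgap | harea
  · exact .inl (ht.energy_add_lt hk hgk hgap)
  · exact (ht.energy_add_le s).lt_or_eq.imp id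
      fun heq => ⟨heq, ht.areaProduct_add_lt hk hgk hf hf' harea⟩

end UnitTransfer

end UnitTransfer

section Height

variable {n r i j k : ℕ} {α ω B B' : Finset ℕ}

/-- The height of a path just before its `k`-th step: the number of north steps at positions
smaller than `k`. -/
def height (B : Finset ℕ) (k : ℕ) : ℕ := Nat.count (· ∈ B) k

theorem height_succ (B : Finset ℕ) (k : ℕ) :
    height B (k + 1) = height B k + if k ∈ B then 1 else 0 :=
  Nat.count_succ _ k

theorem height_eq_sum (B : Finset ℕ) (k : ℕ) : height B k = ∑ x ∈ B, if x < k then 1 else 0 := by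
  rw [height, Nat.count_eq_card_filter_range, ← Finset.card_filter]
  congr 1
  ext x
  simp [and_comm]

theorem height_injective : Function.Injective height := fun B C hBC => by
  ext x
  rw [← Nat.count_lt_count_succ_iff (p := (· ∈ B)), ← Nat.count_lt_count_succ_iff (p := (· ∈ C))]
  change height B x < height B (x + 1) ↔ height C x < height C (x + 1)
  rw [hBC]

theorem height_le_card (B : Finset ℕ) (k : ℕ) : height B k ≤ B.card := by
  rw [height_eq_sum, ← Finset.card_filter]
  exact Finset.card_filter_le _ _

theorem height_eq_of_isLatticePath (hB : IsLatticePath n r B) (hk : n + r < k) :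
    height B k = r := by
  rw [height_eq_sum, ← Finset.card_filter, Finset.filter_true_of_mem, hB.2]
  exact fun x hx => (Finset.mem_Icc.mp (hB.1 hx)).2.trans_lt hk

theorem sort_get_eq_nth (B : Finset ℕ) (hi : i < (B.sort (· ≤ ·)).length) :
    (B.sort (· ≤ ·)).get ⟨i, hi⟩ = Nat.nth (· ∈ B) i := by
  have hfin : (Set.ofPred (· ∈ B)).Finite := B.finite_toSet
  have htoFinset : hfin.toFinset = B := B.finite_toSet_toFinset
  rw [Nat.nth_eq_getD_sort hfin, htoFinset, List.getD_eq_getElem _ _ hi,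
    List.get_eq_getElem]

theorem lt_height_iff_nth_lt (hi : i < B.card) : i < height B k ↔ Nat.nth (· ∈ B) i < k := by
  refine ⟨Nat.nth_lt_of_lt_count, fun hlt => ?_⟩
  have hcount : Nat.count (· ∈ B) (Nat.nth (· ∈ B) i + 1) = i + 1 :=
    Nat.count_nth_succ fun hf => hi.trans_eq (by congr 1; ext; simp)
  exact hcount.symm.le.trans (Nat.count_monotone _ hlt)

theorem pathAbove_iff_height_le (hcard : B.card = B'.card) :
    PathAbove B B' ↔ height B' ≤ height B := by
  simp only [PathAbove, sort_get_eq_nth, Finset.length_sort]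
  refine ⟨fun habove k => le_of_forall_lt fun i hik => ?_, fun hle i hi hi' => ?_⟩
  · have hi' : i < B'.card := hik.trans_le (height_le_card B' k)
    have hi : i < B.card := hcard ▸ hi'
    exact (lt_height_iff_nth_lt hi).mpr
      ((habove i hi hi').trans_lt ((lt_height_iff_nth_lt hi').mp hik))
  · have hlt := (lt_height_iff_nth_lt hi').mpr (Nat.lt_succ_self _)
    exact Nat.le_of_lt_succ ((lt_height_iff_nth_lt hi).mp (hlt.trans_le (hle _)))

theorem isLPMBasis_iff_height_mem_Icc (hα : IsLatticePath n r α) (hω : IsLatticePath n r ω) :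
    IsLPMBasis n r α ω B ↔ IsLatticePath n r B ∧ height B ∈ Set.Icc (height ω) (height α) := by
  refine and_congr_right fun hB => ?_
  rw [pathAbove_iff_height_le (hα.2.trans hB.2.symm), pathAbove_iff_height_le
    (hB.2.trans hω.2.symm), Set.mem_Icc, and_comm]

theorem exists_maximal_interval {p : ℕ → Prop} {k N : ℕ} (hzero : ¬ p 0) (hN : ¬ p N) (hkN : k ≤ N)
    (hk : p k) : ∃ i j, i < k ∧ k ≤ j ∧ ¬ p i ∧ ¬ p (j + 1) ∧ ∀ l, i < l → l ≤ j → p l := by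
  classical
  have hleft := Nat.findGreatest_spec (P := fun l => ¬ p l) (Nat.zero_le k) hzero
  have hleft_le := Nat.findGreatest_le (P := fun l => ¬ p l) k
  have hright : ∃ j, k ≤ j ∧ ¬ p (j + 1) := by
    obtain ⟨M, rfl⟩ : ∃ M, N = M + 1 := Nat.exists_eq_succ_of_ne_zero (by grind)
    exact ⟨M, by grind, hN⟩
  refine ⟨Nat.findGreatest (fun l => ¬ p l) k, Nat.find hright, ?_, (Nat.find_spec hright).1,
    hleft, (Nat.find_spec hright).2, fun l hil hlj => ?_⟩
  · exact hleft_le.lt_of_ne fun heq => hleft (heq.symm ▸ hk)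
  · rcases le_or_gt l k with hlk | hkl
    · exact not_not.mp (Nat.findGreatest_is_greatest hil hlk)
    · obtain ⟨l, rfl⟩ := Nat.exists_eq_succ_of_ne_zero (Nat.ne_zero_of_lt hkl)
      have := Nat.find_min hright (m := l) hlj
      grind

theorem exists_exchange_positions {N : ℕ} (hN : height B N = height B' N) (hkN : k ≤ N)
    (hk : height B' k < height B k) :
    ∃ i j, i < k ∧ k ≤ j ∧ (i ∈ B ∧ i ∉ B') ∧ (j ∈ B' ∧ j ∉ B) ∧
      ∀ l, i < l → l ≤ j → height B' l < height B l := by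
  obtain ⟨i, j, hik, hkj, hi, hj, hexcess⟩ :=
    exists_maximal_interval (p := fun l => height B' l < height B l) (by simp [height])
      hN.not_gt hkN hk
  refine ⟨i, j, hik, hkj, ?_, ?_, hexcess⟩
  · have hnext := hexcess (i + 1) (Nat.lt_succ_self i) (by omega)
    rw [height_succ, height_succ] at hnext
    grind
  · have hlast := hexcess j (by omega) le_rfl
    rw [height_succ, height_succ] at hj
    grind

theorem height_insert_erase_add (hi : i ∈ B) (hj : j ∉ B) (k : ℕ) :
    height (insert j (B.erase i)) k + (if i < k then 1 else 0) =
      height B k + if j < k then 1 else 0 := by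
  rw [height_eq_sum, height_eq_sum, Finset.sum_insert (by simp [hj]),
    ← Finset.sum_erase_add B _ hi]
  ring

theorem unitTransfer_height_exchange (hi : i ∈ B ∧ i ∉ B') (hj : j ∈ B' ∧ j ∉ B)
    (hexcess : ∀ l, i < l → l ≤ j → height B' l < height B l) (hij : i < j) :
    UnitTransfer (height B) (height B') (height (insert j (B.erase i)))
      (height (insert i (B'.erase j))) := by
  intro l
  have hC := height_insert_erase_add hi.1 hj.2 l
  have hC' := height_insert_erase_add hj.1 hi.2 l
  have := hexcess l
  grind

theorem isLatticePath_insert_erase (hB : IsLatticePath n r B) (hB' : IsLatticePath n r B')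
    (hi : i ∈ B) (hj : j ∈ B' ∧ j ∉ B) : IsLatticePath n r (insert j (B.erase i)) := by
  refine ⟨Finset.insert_subset (hB'.1 hj.1) ((Finset.erase_subset i B).trans hB.1), ?_⟩
  rw [Finset.card_insert_of_notMem (by simp [hj.2]), Finset.card_erase_add_one hi, hB.2]

theorem exists_symExchM_unitTransfer (hα : IsLatticePath n r α) (hω : IsLatticePath n r ω)
    (hB : IsLPMBasis n r α ω B) (hB' : IsLPMBasis n r α ω B') (hkN : k ≤ n + r)
    (hk : height B' k < height B k) :
    ∃ C C', SymExchM (IsLPMBasis n r α ω) B B' C C' ∧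
      UnitTransfer (height B) (height B') (height C) (height C') ∧ height C k < height B k := by
  have hN : height B (n + r + 1) = height B' (n + r + 1) := by
    rw [height_eq_of_isLatticePath hB.1 (Nat.lt_succ_self _),
      height_eq_of_isLatticePath hB'.1 (Nat.lt_succ_self _)]
  obtain ⟨i, j, hik, hkj, hi, hj, hexcess⟩ := exists_exchange_positions hN (by omega) hk
  have htransfer := unitTransfer_height_exchange hi hj hexcess (by omega)
  have hlowered := height_insert_erase_add hi.1 hj.2 k
  rw [if_pos hik, if_neg hkj.not_gt] at hlowered
  have hbounds := htransfer.mem_Icc ((isLPMBasis_iff_height_mem_Icc hα hω).mp hB).2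
    ((isLPMBasis_iff_height_mem_Icc hα hω).mp hB').2
  refine ⟨_, _, ⟨hB, hB', i, j, hi.1, hi.2, hj.1, hj.2, rfl, rfl, ?_, ?_⟩, htransfer, by omega⟩
  · exact (isLPMBasis_iff_height_mem_Icc hα hω).mpr
      ⟨isLatticePath_insert_erase hB.1 hB'.1 hi.1 hj, hbounds.1⟩
  · exact (isLPMBasis_iff_height_mem_Icc hα hω).mpr
      ⟨isLatticePath_insert_erase hB'.1 hB.1 hj.1 hi, hbounds.2⟩

end Height

section BalancingOrder

universe v

variable {n r : ℕ} {α ω : Finset ℕ} {P : Finset ℕ → Prop}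

theorem weight_height_eq_of_toricExponent_eq {M M' : {B : Finset ℕ // P B} →₀ ℕ}
    (hexp : toricExponent P M = toricExponent P M') :
    Finsupp.weight (fun B => height B.1) M = Finsupp.weight (fun B => height B.1) M' := by
  let heightHom : (ℕ →₀ ℕ) →+ (ℕ → ℕ) := Finsupp.weight fun i k => if i < k then 1 else 0
  have heightHom_indicator (B : Finset ℕ) :
      heightHom (∑ i ∈ B, Finsupp.single i 1) = height B := by
    ext k
    simp [heightHom, height_eq_sum, Finsupp.weight_single]
  simpa only [toricExponent, map_weight, heightHom_indicator] using congrArg heightHom hexp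

theorem degree_eq_of_weight_height_eq (hr : 0 < r) (hP : ∀ B, P B → IsLatticePath n r B)
    {M M' : {B : Finset ℕ // P B} →₀ ℕ}
    (hweight : Finsupp.weight (fun B => height B.1) M = Finsupp.weight (fun B => height B.1) M') :
    M.degree = M'.degree := by
  have weight_final (N : {B : Finset ℕ // P B} →₀ ℕ) :
      Finsupp.weight (fun B => height B.1) N (n + r + 1) = N.degree * r := by
    simp only [Finsupp.weight_apply, Finsupp.sum, Finset.sum_apply, Pi.smul_apply, smul_eq_mul,
      Finsupp.degree_apply, Finset.sum_mul]
    exact Finset.sum_congr rfl fun B _ => by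
      rw [height_eq_of_isLatticePath (hP B.1 B.2) (Nat.lt_succ_self _)]
  refine Nat.eq_of_mul_eq_mul_right hr ?_
  rw [← weight_final, ← weight_final, hweight]

/-- The order comparing total energy, then total area product, then `m`. -/
noncomputable def balancingOrder (n r : ℕ) (m : MonomialOrder.{0, v} {B : Finset ℕ // P B}) :
    MonomialOrder.{0, v} {B : Finset ℕ // P B} :=
  weightRefinement (fun B => energy (Finset.range (n + r + 1)) (height B.1))
    (weightRefinement (fun B => areaProduct r (Finset.range (n + r + 1)) (height B.1)) m)

theorem isBalanced_of_isStandard (hα : IsLatticePath n r α) (hω : IsLatticePath n r ω)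
    {m : MonomialOrder {B : Finset ℕ // IsLPMBasis n r α ω B}}
    {M : {B : Finset ℕ // IsLPMBasis n r α ω B} →₀ ℕ} (hM : IsStandard (balancingOrder n r m) M) :
    IsBalanced (fun B => height B.1) M := by
  by_contra hbal
  obtain ⟨B, hB, B', hB', k, hk, hexcess⟩ :=
    exists_excess_of_not_isBalanced (Finset.range (n + r + 1)) hbal
  have height_le (A : {B : Finset ℕ // IsLPMBasis n r α ω B}) (l : ℕ) : height A.1 l ≤ r :=
    (height_le_card A.1 l).trans_eq A.2.1.2
  have hkN : k ≤ n + r := by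
    by_contra! hNk
    rw [height_eq_of_isLatticePath B.2.1 hNk, height_eq_of_isLatticePath B'.2.1 hNk] at hk
    exact hk.false
  obtain ⟨C, C', hexch, htransfer, hlowered⟩ :=
    exists_symExchM_unitTransfer hα hω B.2 B'.2 hkN hk
  have ⟨_, _, _, _, _, _, _, _, _, _, hC, hC'⟩ := hexch
  refine hM (C := ⟨C, hC⟩) (C' := ⟨C', hC'⟩) hexch ?_
    (single_add_single_le (by rintro rfl; exact hk.false) hB hB')
  have hdecr := htransfer.energy_areaProduct_lt (Finset.mem_range_succ_iff.mpr hkN) hlowered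
    (height_le B) (height_le B') hexcess
  refine weightRefinement_lt_iff.mpr (Or.imp_right (And.imp_right fun harea =>
    weightRefinement_lt_iff.mpr (.inl harea)) ?_)
  simpa only [map_add, Finsupp.weight_single, one_smul] using hdecr

theorem injOn_toricExponent_isStandard (hr : 0 < r) (hα : IsLatticePath n r α)
    (hω : IsLatticePath n r ω) (m : MonomialOrder {B : Finset ℕ // IsLPMBasis n r α ω B}) :
    Set.InjOn (toricExponent (IsLPMBasis n r α ω)) {M | IsStandard (balancingOrder n r m) M} := by
  intro M hM M' hM' hexp
  have hweight := weight_height_eq_of_toricExponent_eq hexp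
  exact (isBalanced_of_isStandard hα hω hM).eq_of_weight_eq
    (height_injective.comp Subtype.val_injective) (isBalanced_of_isStandard hα hω hM')
    (degree_eq_of_weight_height_eq hr (fun _ hB => hB.1) hweight) hweight

end BalancingOrder

end LatticePathMatroid

/-- There is a monomial order on the base ring of a lattice path matroid under
which the symmetric exchange binomials form a Gröbner basis of the toric
ideal. -/
theorem stmt9 (n r : ℕ) (hn : 0 < n) (hr : 0 < r) (α ω : Finset ℕ)
    (hα : IsLatticePath n r α) (hω : IsLatticePath n r ω) (hαω : PathAbove α ω) :
    ∃ succ : ({B : Finset ℕ // IsLPMBasis n r α ω B} →₀ ℕ) →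
        ({B : Finset ℕ // IsLPMBasis n r α ω B} →₀ ℕ) → Prop,
      IsMonomialOrder succ ∧
      ∀ f : MvPolynomial {B : Finset ℕ // IsLPMBasis n r α ω B} ℂ,
        f ∈ RingHom.ker (toricMapM (IsLPMBasis n r α ω)) → f ≠ 0 →
          ∃ d, IsLeadMonOf succ f d ∧
            ∃ g ∈ SEBM (IsLPMBasis n r α ω), ∃ e, IsLeadMonOf succ g e ∧ e ≤ d := by
  obtain ⟨m⟩ := LatticePathMatroid.exists_monomialOrder {B : Finset ℕ // IsLPMBasis n r α ω B}
  let m' := LatticePathMatroid.balancingOrder n r m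
  refine ⟨fun M M' => M' ≺[m'] M, LatticePathMatroid.isMonomialOrder_lt m', fun f hf hf0 => ?_⟩
  exact ⟨m'.degree f, LatticePathMatroid.isLeadMonOf_degree m' hf0,
    LatticePathMatroid.exists_leadMon_le_of_injOn_isStandard
      (LatticePathMatroid.injOn_toricExponent_isStandard hr hα hω m) hf hf0⟩
end

section
/- Let α ⪰ ω be lattice paths from (0,0) to (n,r). Then the collection B = {N(σ) : α ⪰ σ ⪰ ω} of r-element subsets of {1,…,n+r} is the set of bases of a matroid: B is nonempty, and for all B, B' ∈ B and every b ∈ B \ B' there exists b' ∈ B' \ B with (B \ {b}) ∪ {b'} ∈ B. -/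
/-!
Replace a path `σ` by its height function `i ↦ count (· ∈ N(σ)) i`, the number of north steps at
positions `< i`; then `⪰` is the pointwise order of height functions. Let `b ∈ B \ B'`. If `B` is
strictly lower than `B'` at `b`, let `b'` be the last step before `b` at which `B` falls behind;
otherwise `B` is strictly higher than `B'` right after `b`, and `b'` is the first later step at
which `B'` catches up. Exchanging `b` for `b'` moves the height of `B` one unit towards that of `B'`
between the two positions, where they differ, and leaves it unchanged elsewhere. So the new path
stays pointwise between `B` and `B'`, hence between `ω` and `α`.
-/

open Nat (count nth)

section Crossing

variable {p q : ℕ → Prop} [DecidablePred p] [DecidablePred q] {b m : ℕ}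

lemma exists_lt_forall_count_lt_count (h : count p b < count q b) :
    ∃ c < b, q c ∧ ¬p c ∧ ∀ i ∈ Set.Ioc c b, count p i < count q i := by
  induction b with
  | zero => simp at h
  | succ b ih =>
    by_cases hb : count p b < count q b
    · obtain ⟨c, hcb, hqc, hpc, hlt⟩ := ih hb
      refine ⟨c, by omega, hqc, hpc, fun i hi ↦ ?_⟩
      rcases Nat.of_le_succ hi.2 with hib | rfl
      · exact hlt i ⟨hi.1, hib⟩
      · exact h
    · have hcross : q b ∧ ¬p b := by grind
      refine ⟨b, b.lt_succ_self, hcross.1, hcross.2, fun i hi ↦ ?_⟩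
      rwa [show i = b + 1 from le_antisymm hi.2 hi.1]

lemma exists_ge_forall_count_lt_count (hbm : b ≤ m) (hb : count q b < count p b)
    (hm : count p m ≤ count q m) :
    ∃ c ≥ b, q c ∧ ¬p c ∧ ∀ i ∈ Set.Icc b c, count q i < count p i := by
  induction hbm using Nat.decreasingInduction with
  | self => exact absurd hm hb.not_ge
  | of_succ b _ ih =>
    by_cases hb' : count q (b + 1) < count p (b + 1)
    · obtain ⟨c, hbc, hqc, hpc, hlt⟩ := ih hb'
      refine ⟨c, by omega, hqc, hpc, fun i hi ↦ ?_⟩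
      rcases hi.1.eq_or_lt with rfl | hbi
      · exact hb
      · exact hlt i ⟨hbi, hi.2⟩
    · have hcross : q b ∧ ¬p b := by grind
      refine ⟨b, le_rfl, hcross.1, hcross.2, fun i hi ↦ ?_⟩
      rwa [le_antisymm hi.2 hi.1]

end Crossing

section PathAbove

variable {S T : Finset ℕ} {k : ℕ}

lemma toFinset_setOfPred_mem {X : Type*} {S : Finset X} (hS : (Set.ofPred (· ∈ S)).Finite) :
    hS.toFinset = S := by
  ext
  simp

lemma nth_mem_eq_get_sort (hk : k < (S.sort (· ≤ ·)).length) :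
    nth (· ∈ S) k = (S.sort (· ≤ ·)).get ⟨k, hk⟩ := by
  have hS : (Set.ofPred (· ∈ S)).Finite := S.finite_toSet
  rw [Nat.nth_eq_getD_sort hS, toFinset_setOfPred_mem, List.getD_eq_getElem _ _ hk,
    List.get_eq_getElem]

lemma nth_lt_iff_lt_count {p : ℕ → Prop} [DecidablePred p] {i : ℕ}
    (hk : ∀ hp : (Set.ofPred p).Finite, k < hp.toFinset.card) :
    nth p k < i ↔ k < count p i := by
  refine ⟨fun h ↦ ?_, Nat.nth_lt_of_lt_count⟩
  simpa only [Nat.count_nth hk] using Nat.count_strict_mono (Nat.nth_mem k hk) h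

lemma nth_mem_lt_iff_lt_count (hk : k < S.card) {i : ℕ} :
    nth (· ∈ S) k < i ↔ k < count (· ∈ S) i :=
  nth_lt_iff_lt_count fun hS ↦ by rwa [toFinset_setOfPred_mem hS]

lemma count_mem_le_card (i : ℕ) : count (· ∈ S) i ≤ S.card := by
  rw [Nat.count_eq_card_filter_range, Finset.filter_mem_eq_inter]
  exact Finset.card_le_card Finset.inter_subset_right

lemma pathAbove_iff_forall_nth_le (hcard : S.card = T.card) :
    PathAbove S T ↔ ∀ k < S.card, nth (· ∈ S) k ≤ nth (· ∈ T) k := by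
  simp only [PathAbove, ← nth_mem_eq_get_sort, Finset.length_sort, ← hcard]
  exact forall_congr' fun k ↦ ⟨fun h hk ↦ h hk hk, fun h hk _ ↦ h hk⟩

lemma pathAbove_iff_forall_count_le (hcard : S.card = T.card) :
    PathAbove S T ↔ ∀ i, count (· ∈ T) i ≤ count (· ∈ S) i := by
  rw [pathAbove_iff_forall_nth_le hcard]
  constructor
  · intro hle i
    refine le_of_forall_lt fun k hk ↦ ?_
    have hkS : k < S.card := hcard ▸ hk.trans_le (count_mem_le_card i)
    exact (nth_mem_lt_iff_lt_count hkS).1 ((hle k hkS).trans_lt (Nat.nth_lt_of_lt_count hk))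
  · intro hle k hk
    refine le_of_forall_gt fun i hi ↦ Nat.nth_lt_of_lt_count ?_
    exact ((nth_mem_lt_iff_lt_count (hcard ▸ hk)).1 hi).trans_le (hle i)

end PathAbove

section Exchange

variable {B C : Finset ℕ} {b c : ℕ}

lemma count_mem_eq_card_of_subset_range {m : ℕ} (h : B ⊆ Finset.range m) :
    count (· ∈ B) m = B.card := by
  rw [Nat.count_eq_card_filter_range, Finset.filter_mem_eq_inter, Finset.inter_eq_right.2 h]

lemma card_insert_erase_of_notMem {X : Type*} [DecidableEq X] {B : Finset X} {b c : X}
    (hb : b ∈ B) (hc : c ∉ B) :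
    (insert c (B.erase b)).card = B.card := by
  rw [Finset.card_insert_of_notMem (mt Finset.mem_of_mem_erase hc), Finset.card_erase_add_one hb]

lemma count_mem_insert_erase (hb : b ∈ B) (hc : c ∉ B) (i : ℕ) :
    count (· ∈ insert c (B.erase b)) i + (if b < i then 1 else 0) =
      count (· ∈ B) i + if c < i then 1 else 0 := by
  induction i with
  | zero => simp
  | succ i ih => grind

lemma exists_exchange_count_mem_uIcc (hcard : B.card = C.card) (hb : b ∈ B \ C) :
    ∃ c ∈ C \ B, ∀ i,
      count (· ∈ insert c (B.erase b)) i ∈ Set.uIcc (count (· ∈ B) i) (count (· ∈ C) i) := by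
  obtain ⟨hbB, hbC⟩ := Finset.mem_sdiff.1 hb
  by_cases hlt : count (· ∈ B) b < count (· ∈ C) b
  · obtain ⟨c, hcb, hcC, hcB, hcount⟩ := exists_lt_forall_count_lt_count hlt
    refine ⟨c, Finset.mem_sdiff.2 ⟨hcC, hcB⟩, fun i ↦ ?_⟩
    have hexch := count_mem_insert_erase hbB hcB i
    grind [Set.mem_uIcc]
  · have hlt_succ : count (· ∈ C) (b + 1) < count (· ∈ B) (b + 1) := by
      simpa [Nat.count_succ, hbB, hbC] using hlt
    obtain ⟨m, hm⟩ := (B ∪ C ∪ {b}).exists_nat_subset_range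
    have hcount_eq : count (· ∈ B) m = count (· ∈ C) m := by
      rw [count_mem_eq_card_of_subset_range (by grind),
        count_mem_eq_card_of_subset_range (by grind), hcard]
    obtain ⟨c, hbc, hcC, hcB, hcount⟩ :=
      exists_ge_forall_count_lt_count (m := m) (by grind) hlt_succ hcount_eq.le
    refine ⟨c, Finset.mem_sdiff.2 ⟨hcC, hcB⟩, fun i ↦ ?_⟩
    have hexch := count_mem_insert_erase hbB hcB i
    grind [Set.mem_uIcc]

lemma IsLatticePath.insert_erase {n r : ℕ} (hB : IsLatticePath n r B) (hb : b ∈ B)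
    (hc : c ∈ Finset.Icc 1 (n + r)) (hcB : c ∉ B) :
    IsLatticePath n r (insert c (B.erase b)) :=
  ⟨Finset.insert_subset hc ((B.erase_subset b).trans hB.1),
    (card_insert_erase_of_notMem hb hcB).trans hB.2⟩

lemma isLPMBasis_iff_count_mem_Icc {n r : ℕ} {α ω : Finset ℕ} (hα : α.card = r) (hω : ω.card = r) :
    IsLPMBasis n r α ω B ↔ IsLatticePath n r B ∧
      ∀ i, count (· ∈ B) i ∈ Set.Icc (count (· ∈ ω) i) (count (· ∈ α) i) := by
  refine and_congr_right fun hB ↦ ?_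
  rw [pathAbove_iff_forall_count_le (hα.trans hB.2.symm),
    pathAbove_iff_forall_count_le (hB.2.trans hω.symm), and_comm, ← forall_and]
  rfl

end Exchange

/-- The collection `{N(σ) : α ⪰ σ ⪰ ω}` is the set of bases of a matroid: it is
nonempty and satisfies the basis exchange axiom. -/
theorem stmt10 (n r : ℕ) (hn : 0 < n) (hr : 0 < r) (α ω : Finset ℕ)
    (hα : IsLatticePath n r α) (hω : IsLatticePath n r ω) (hαω : PathAbove α ω) :
    (∃ B, IsLPMBasis n r α ω B) ∧
    ∀ B B', IsLPMBasis n r α ω B → IsLPMBasis n r α ω B' →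
      ∀ b ∈ B \ B', ∃ b' ∈ B' \ B, IsLPMBasis n r α ω (insert b' (B.erase b)) := by
  refine ⟨⟨α, hα, fun _ _ _ ↦ le_rfl, hαω⟩, fun B B' hB hB' b hb ↦ ?_⟩
  rw [isLPMBasis_iff_count_mem_Icc hα.2 hω.2] at hB hB'
  obtain ⟨b', hb', hbetween⟩ := exists_exchange_count_mem_uIcc (hB.1.2.trans hB'.1.2.symm) hb
  obtain ⟨hb'B', hb'B⟩ := Finset.mem_sdiff.1 hb'
  refine ⟨b', hb', (isLPMBasis_iff_count_mem_Icc hα.2 hω.2).2 ⟨?_, fun i ↦ ?_⟩⟩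
  · exact hB.1.insert_erase (Finset.mem_sdiff.1 hb).1 (hB'.1.1 hb'B') hb'B
  · exact Set.uIcc_subset_Icc (hB.2 i) (hB'.2 i) (hbetween i)
end
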